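/- For every natural number n ≥ 0, u₂ⁿ · B[n+1,0,0,n] · u₁^{n+1} = Σ_{(k,l)} q^{f(n,k,l)} [n−k; l][n+1−l; k] p₁^{n+1−k} u₂^{2k} u₁^{2l} p₀^{n−l}, where the sum runs over all pairs (k,l) ∈ ℕ² with k + l ≤ n or (k,l) = (n+1,0), and f(n,k,l) = n(n−2) + k(n+2) + l(n+1) − 2kl. -/

import Mathlib

noncomputable section

abbrev F : Type := RatFunc ℚ

/-- The deformation parameter `q`. -/
def qq : F := RatFunc.X

/-- The quantum integer `[3] = q² + 1 + q⁻²`. -/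
def box3 : F := qq ^ 2 + 1 + (qq⁻¹) ^ 2

/-- The generators `E₁, E₂` of the free algebra. -/
def gen (i : Fin 2) : FreeAlgebra F (Fin 2) := FreeAlgebra.ι F i

/-- The quantized Serre relations. -/
inductive SerreRel : FreeAlgebra F (Fin 2) → FreeAlgebra F (Fin 2) → Prop
  | rel1 : SerreRel
      (gen 0 ^ 3 * gen 1 - box3 • (gen 0 ^ 2 * gen 1 * gen 0)
        + box3 • (gen 0 * gen 1 * gen 0 ^ 2) - gen 1 * gen 0 ^ 3) 0
  | rel2 : SerreRel
      (gen 1 ^ 3 * gen 0 - box3 • (gen 1 ^ 2 * gen 0 * gen 1)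
        + box3 • (gen 1 * gen 0 * gen 1 ^ 2) - gen 0 * gen 1 ^ 3) 0

/-- `U = U_q(𝔫)`, the free algebra on `E₁, E₂` modulo the quantized Serre relations. -/
abbrev U : Type := RingQuot SerreRel

def E1 : U := RingQuot.mkAlgHom F SerreRel (gen 0)
def E2 : U := RingQuot.mkAlgHom F SerreRel (gen 1)

/-- `A = (1/(q+q⁻¹))(E₂E₁ − q⁻²E₁E₂)`. -/
def Aelt : U := (qq + qq⁻¹)⁻¹ • (E2 * E1 - (qq⁻¹) ^ 2 • (E1 * E2))

def v0 : U := E1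
def v1 : U := Aelt * v0 - v0 * Aelt
def v2 : U := Aelt * v1 - v1 * Aelt
def v3 : U := Aelt * v2 - v2 * Aelt

/-- `uᵢ = (1 − q⁻²)⁻²ⁱ vᵢ`. -/
def u0 : U := v0
def u1 : U := ((1 - (qq⁻¹) ^ 2)⁻¹) ^ 2 • v1
def u2 : U := ((1 - (qq⁻¹) ^ 2)⁻¹) ^ 4 • v2
def u3 : U := ((1 - (qq⁻¹) ^ 2)⁻¹) ^ 6 • v3

/-- `p₁ = u₃u₁ − q²u₂²`. -/
def p1 : U := u3 * u1 - qq ^ 2 • u2 ^ 2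
/-- `p₀ = u₂u₀ − q²u₁²`. -/
def p0 : U := u2 * u0 - qq ^ 2 • u1 ^ 2

/-- `S`, the subalgebra of `U` generated by `u₀, u₁, u₂, u₃`. -/
abbrev Sgen : Subalgebra F U := Algebra.adjoin F ({u0, u1, u2, u3} : Set U)

def us0 : Sgen := ⟨u0, Algebra.subset_adjoin (by simp)⟩
def us1 : Sgen := ⟨u1, Algebra.subset_adjoin (by simp)⟩
def us2 : Sgen := ⟨u2, Algebra.subset_adjoin (by simp)⟩
def us3 : Sgen := ⟨u3, Algebra.subset_adjoin (by simp)⟩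

/-- `p₁ = u₃u₁ − q²u₂²` as an element of `S`. -/
def ps1 : Sgen := us3 * us1 - qq ^ 2 • us2 ^ 2
/-- `p₀ = u₂u₀ − q²u₁²` as an element of `S`. -/
def ps0 : Sgen := us2 * us0 - qq ^ 2 • us1 ^ 2

/-- Index quadruples `a = (a₃, a₂, a₁, a₀)`. -/
abbrev Idx : Type := ℕ × ℕ × ℕ × ℕ

/-- The PBW monomial `u₃^{a₃}u₂^{a₂}u₁^{a₁}u₀^{a₀}`. -/
def mon (a : Idx) : Sgen := us3 ^ a.1 * us2 ^ a.2.1 * us1 ^ a.2.2.1 * us0 ^ a.2.2.2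

/-- `b(a) = C(a₃,2)+C(a₂,2)+C(a₁,2)+C(a₀,2)`. -/
def bexp (a : Idx) : ℕ :=
  Nat.choose a.1 2 + Nat.choose a.2.1 2 + Nat.choose a.2.2.1 2 + Nat.choose a.2.2.2 2

/-- The dual PBW basis element `E[a] = q^{b(a)} u₃^{a₃}u₂^{a₂}u₁^{a₁}u₀^{a₀}`. -/
def Ee (a : Idx) : Sgen := qq ^ bexp a • mon a

/-- `N(a) = (a₃+a₂+a₁+a₀)² − 7a₃ − 5a₂ − 3a₁ − a₀`. -/
def Nnum (a : Idx) : ℤ :=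
  ((a.1 : ℤ) + a.2.1 + a.2.2.1 + a.2.2.2) ^ 2
    - 7 * a.1 - 5 * a.2.1 - 3 * a.2.2.1 - a.2.2.2

/-- `a ⊴ b` iff `b − a ∈ ℕ·(−1,2,−1,0) + ℕ·(0,−1,2,−1)`. -/
def tri (a b : Idx) : Prop :=
  ∃ s r : ℕ,
    (b.1 : ℤ) = a.1 - s ∧
    (b.2.1 : ℤ) = a.2.1 + 2 * s - r ∧
    (b.2.2.1 : ℤ) = a.2.2.1 - s + 2 * r ∧
    (b.2.2.2 : ℤ) = a.2.2.2 - r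

/-- `S(a) = {b ∈ ℕ⁴ : a ⊴ b and a ≠ b}`. -/
def Sset (a : Idx) : Set Idx := {b | tri a b ∧ a ≠ b}

/-- Condition (i): `B[a] − E[a] ∈ Σ_{b ∈ S(a)} qℤ[q]·E[b]`. -/
def cond1 (B : Idx → Sgen) (a : Idx) : Prop :=
  ∃ φ : Idx →₀ Polynomial ℤ,
    (↑φ.support : Set Idx) ⊆ Sset a ∧
    B a - Ee a =
      φ.sum fun b p => (qq * Polynomial.eval₂ (Int.castRingHom F) qq p) • Ee b

/-- Hypotheses on the bar involution of coefficients `bar : q ↦ q⁻¹` and on the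
anti-automorphism `σ` of `S`: `σ` is an additive, anti-multiplicative bijection with
`σ(c(q)·x) = c(q⁻¹)·σ(x)` and `σ(uᵢ) = q^{2i}uᵢ`. -/
def SigmaHyp (bar : F →+* F) (σ : Sgen → Sgen) : Prop :=
  bar qq = qq⁻¹ ∧
  Function.Bijective σ ∧
  (∀ x y : Sgen, σ (x + y) = σ x + σ y) ∧
  (∀ x y : Sgen, σ (x * y) = σ y * σ x) ∧
  (∀ (c : F) (x : Sgen), σ (c • x) = bar c • σ x) ∧
  σ us0 = us0 ∧ σ us1 = qq ^ 2 • us1 ∧ σ us2 = qq ^ 4 • us2 ∧ σ us3 = qq ^ 6 • us3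

/-- The defining properties of the dual canonical basis `B`: for every `a ∈ ℕ⁴`,
`B[a] − E[a] ∈ Σ_{b ∈ S(a)} qℤ[q]·E[b]` and `σ(B[a]) = q^{−N(a)}B[a]`. -/
def DCB (bar : F →+* F) (σ : Sgen → Sgen) (B : Idx → Sgen) : Prop :=
  ∀ a : Idx, cond1 B a ∧ σ (B a) = qq ^ (-Nnum a) • B a

/-- Extension of `B` to integer quadruples by the convention that `B[a] = 0` whenever
some coordinate of `a` is negative. -/
def Bz (B : Idx → Sgen) (a : ℤ × ℤ × ℤ × ℤ) : Sgen :=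
  if 0 ≤ a.1 ∧ 0 ≤ a.2.1 ∧ 0 ≤ a.2.2.1 ∧ 0 ≤ a.2.2.2 then
    B (a.1.toNat, a.2.1.toNat, a.2.2.1.toNat, a.2.2.2.toNat)
  else 0

/-- The quantum integer `[m] = (q^m − q^{−m})/(q − q⁻¹)`. -/
def qint (m : ℤ) : F := (qq ^ m - qq ^ (-m)) / (qq - qq⁻¹)

/-- The quantized factorial `[i]! = [i][i−1]⋯[1]`. -/
def qfact (i : ℕ) : F := ∏ j ∈ Finset.range i, qint ((j : ℤ) + 1)

/-- The quantum binomial coefficient `[m; i] = [m][m−1]⋯[m−i+1]/[i]!`. -/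
def qbinom (m : ℤ) (i : ℕ) : F := (∏ j ∈ Finset.range i, qint (m - j)) / qfact i

/-- `f(n,k,l) = n(n−2) + k(n+2) + l(n+1) − 2kl`. -/
def fexp (n k l : ℕ) : ℤ :=
  (n : ℤ) * ((n : ℤ) - 2) + (k : ℤ) * ((n : ℤ) + 2) + (l : ℤ) * ((n : ℤ) + 1)
    - 2 * (k : ℤ) * (l : ℤ)

set_option linter.unusedSimpArgs false
set_option linter.unusedTactic false
set_option linter.unusedSimpArgs false
section Part1
variable {K R : Type*} [Field K] [Ring R] [Algebra K R]

theorem serre_core (t b : K) (ht : t ≠ 0) (hb : b ≠ 0) (h3 : 1 + t + t^2 ≠ 0)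
    (e f A v w : R)
    (hA : f * e = t • (e * f) + b • A)
    (hv : v = A * e - e * A) (hw : w = A * f - f * A)
    (s1 : e * v = t • (v * e)) (s2 : t • (f * w) = w * f) :
    ∃ ψ : R, (ψ * e - e * ψ = b • ((t⁻¹) • (A * v) - t • (v * A))) ∧ ψ * A = A * ψ := by
  have hv' : A * e = e * A + v := by rw [hv]; abel
  have hw' : A * f = f * A + w := by rw [hw]; abel
  -- f v - t v f = t e w - w e
  have key : f * v - t • (v * f) = t • (e * w) - w * e := by
    have h1 : A * (f * e) - (f * e) * A = t • (A * (e * f) - (e * f) * A) := by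
      rw [hA]
      simp only [mul_add, add_mul, mul_smul_comm, smul_mul_assoc, mul_assoc]
      module
    rw [hv, hw]
    linear_combination (norm := (simp only [mul_sub, sub_mul, smul_sub, mul_assoc]; module)) h1
  have e1 : ∀ ψ : R, ψ = f * v - t • (v * f) → ψ * e - e * ψ = b • ((t⁻¹) • (A * v) - t • (v * A)) := by
    intro ψ hψ
    have k1 : f * v = ψ + t • (v * f) := by rw [hψ]; abel
    have h1 : f * (e * v) = t • (f * v * e) := by rw [s1, mul_smul_comm, mul_assoc]
    have h2 : f * (e * v) = t • (e * (f * v)) + b • (A * v) := by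
      rw [← mul_assoc, hA]; simp only [add_mul, smul_mul_assoc, mul_assoc]
    have h3' : f * v * e = ψ * e + t • (v * (t • (e * f) + b • A)) := by
      rw [k1, ← hA]; simp only [add_mul, smul_mul_assoc, mul_assoc]
    rw [h2, h3', k1] at h1
    have h4 : e * (v * f) = t • (v * (e * f)) := by
      rw [← mul_assoc, s1, smul_mul_assoc, mul_assoc]
    simp only [mul_add, mul_smul_comm, h4] at h1
    have h5 : t • (ψ * e - e * ψ) = t • (b • ((t⁻¹) • (A * v) - t • (v * A))) := by
      simp only [smul_sub, smul_smul]
      rw [show t * (b * t⁻¹) = b by field_simp]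
      linear_combination (norm := module) (-1 : ℤ) • h1
    exact smul_right_injective R ht h5
  have e2 : ∀ ψ : R, ψ = t • (e * w) - w * e → t • (ψ * f - f * ψ) = b • (w * A - (t^2) • (A * w)) := by
    intro ψ hψ
    have k1 : t • (e * w) = ψ + w * e := by rw [hψ]; abel
    have k2 : t • (e * f) = f * e - b • A := by rw [hA]; abel
    have h1 : t • (t • (e * f) * w) = t • (e * w) * f := by
      simp only [smul_mul_assoc]; rw [mul_assoc, mul_assoc, ← s2]
      simp only [mul_smul_comm]
    rw [k1, k2] at h1
    have h2 : t • (f * (t • (e * w))) = t • (f * ψ) + w * f * e := by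
      rw [k1, ← s2]; simp only [mul_add, smul_add, smul_mul_assoc, mul_assoc]
    have h3' : t • (w * e * f) = w * (f * e) - b • (w * A) := by
      rw [mul_assoc, ← mul_smul_comm, k2]; simp only [mul_sub, mul_smul_comm]
    simp only [sub_mul, add_mul, smul_mul_assoc, mul_smul_comm, smul_sub, smul_add, mul_assoc] at h1 h2 h3' ⊢
    linear_combination (norm := module) (-t : K) • h1 + h2 - h3'
  refine ⟨f * v - t • (v * f), e1 _ rfl, ?_⟩
  obtain ⟨ψ, hψ⟩ : ∃ ψ, ψ = f * v - t • (v * f) := ⟨_, rfl⟩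
  have E1 := e1 ψ hψ
  have E2 := e2 ψ (hψ.trans key)
  have hψ2 := hψ.trans key
  rw [← hψ]
  have hfA : f * A = A * f - w := by rw [hw]; abel
  have heA : e * A = A * e - v := by rw [hv]; abel
  have F1 : ψ * e = e * ψ + b • ((t⁻¹) • (A * v) - t • (v * A)) := by rw [← E1]; abel
  have F2 : ψ * f = f * ψ + b • (t⁻¹ • (w * A) - t • (A * w)) := by
    have : ψ * f - f * ψ = b • (t⁻¹ • (w * A) - t • (A * w)) := by
      apply smul_right_injective R ht
      simp only [E2, smul_sub, smul_smul]
      rw [show t * (b * t⁻¹) = b by field_simp]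
      module
    rw [← this]; abel
  have hbA : b • A = f * e - t • (e * f) := by rw [hA]; abel
  have c1 : b • (ψ * A - A * ψ) = b • ((t⁻¹ • (w * A) - t • (A * w)) * e + f * ((t⁻¹) • (A * v) - t • (v * A))
      - t • (((t⁻¹) • (A * v) - t • (v * A)) * f) - t • (e * (t⁻¹ • (w * A) - t • (A * w)))) := by
    have : b • (ψ * A - A * ψ) = ψ * (b • A) - (b • A) * ψ := by
      simp only [mul_smul_comm, smul_mul_assoc, smul_sub]
    rw [this, hbA]
    have g1 : ψ * (f * e) = (f * ψ + b • (t⁻¹ • (w * A) - t • (A * w))) * e := by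
      rw [← F2, mul_assoc]
    have g2 : ψ * (e * f) = (e * ψ + b • ((t⁻¹) • (A * v) - t • (v * A))) * f := by
      rw [← F1, mul_assoc]
    have g3 : f * (ψ * e) = f * (e * ψ + b • ((t⁻¹) • (A * v) - t • (v * A))) := by rw [F1]
    have g4 : e * (ψ * f) = e * (f * ψ + b • (t⁻¹ • (w * A) - t • (A * w))) := by rw [F2]
    linear_combination (norm := (simp only [mul_add, add_mul, mul_sub, sub_mul, smul_sub, mul_assoc, mul_smul_comm, smul_mul_assoc]; module)) g1 - t • g2 + g3 - t • g4
  have c2 := smul_right_injective R hb c1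
  have d1 : w * (A * e) = w * (e * A + v) := by rw [hv']
  have d2 : f * (A * v) = (A * f - w) * v := by rw [← hfA, mul_assoc]
  have d3 : v * (A * f) = v * (f * A + w) := by rw [hw']
  have d4 : e * (A * w) = (A * e - v) * w := by rw [← heA, mul_assoc]
  have ψA1 : A * ψ = A * (f * v - t • (v * f)) := by rw [← hψ]
  have ψA2 : A * ψ = A * (t • (e * w) - w * e) := by rw [← hψ2]
  have ψA3 : ψ * A = (f * v - t • (v * f)) * A := by rw [← hψ]
  have ψA4 : ψ * A = (t • (e * w) - w * e) * A := by rw [← hψ2]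
  have fin : (1 + t + t^2) • (ψ * A - A * ψ) = 0 := by
    have c3 : t • (ψ * A - A * ψ) = t • ((t⁻¹ • (w * A) - t • (A * w)) * e + f * ((t⁻¹) • (A * v) - t • (v * A))
      - t • (((t⁻¹) • (A * v) - t • (v * A)) * f) - t • (e * (t⁻¹ • (w * A) - t • (A * w)))) := congrArg _ c2
    have i1 : t * t⁻¹ = 1 := mul_inv_cancel₀ ht
    have i2 : t * (t * t⁻¹) = t := by rw [i1, mul_one]
    simp only [mul_add, add_mul, mul_sub, sub_mul, smul_sub, smul_add, mul_assoc, mul_smul_comm, smul_mul_assoc, smul_smul, i1, i2, one_smul] at c3 d1 d2 d3 d4 ψA1 ψA2 ψA3 ψA4 ⊢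
    linear_combination (norm := module) c3 + d1 + d2 + (t * (t * t)) • d3 + (t * (t * t)) • d4 - ψA1 - (t * t) • ψA2 + (t * t) • ψA3 + ψA4
  have := (smul_eq_zero.mp fin).resolve_left h3
  exact sub_eq_zero.mp this

theorem chain_step (t b : K) (ht : t ≠ 0) (hb : b ≠ 0) (h2 : 1 + t ^ 2 ≠ 0)
    (ψ A x y z z' : R) (hψA : ψ * A = A * ψ)
    (hy : y = A * x - x * A) (hz : z = A * y - y * A) (hz' : z' = A * z - z * A)
    (hD : ψ * x - x * ψ = b • (t⁻¹ • (A * y) - t • (y * A)))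
    (g : x * y = t • (y * x)) :
    ψ * y - y * ψ = b • (t⁻¹ • (A * z) - t • (z * A)) ∧
    x * z = t • (z * x) + (t - 1) • (y * y) ∧
    y * z = t • (z * y) ∧
    x * z' = t • (z' * x) + (t ^ 2 - 1) • (z * y) := by
  have xA : x * A = A * x - y := by rw [hy]; abel
  have yA : y * A = A * y - z := by rw [hz]; abel
  have zA : z * A = A * z - z' := by rw [hz']; abel
  have xA' : ∀ r, x * (A * r) = A * (x * r) - y * r := by
    intro r; rw [← mul_assoc, xA, sub_mul, mul_assoc]
  have yA' : ∀ r, y * (A * r) = A * (y * r) - z * r := by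
    intro r; rw [← mul_assoc, yA, sub_mul, mul_assoc]
  have zA' : ∀ r, z * (A * r) = A * (z * r) - z' * r := by
    intro r; rw [← mul_assoc, zA, sub_mul, mul_assoc]
  have hD' : ψ * x = x * ψ + b • (t⁻¹ • (A * y) - t • (y * A)) := by rw [← hD]; abel
  have D2 : ψ * y - y * ψ = b • (t⁻¹ • (A * z) - t • (z * A)) := by
    have a1 : ψ * (A * x) = A * (x * ψ + b • (t⁻¹ • (A * y) - t • (y * A))) := by
      rw [← hD', ← mul_assoc, hψA, mul_assoc]
    have a2 : ψ * (x * A) = (x * ψ + b • (t⁻¹ • (A * y) - t • (y * A))) * A := by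
      rw [← hD', ← mul_assoc]
    have a3 : x * (ψ * A) = x * (A * ψ) := by rw [hψA]
    conv_lhs => rw [hy]
    rw [hz]
    linear_combination (norm := (simp only [mul_add, add_mul, mul_sub, sub_mul, smul_sub, smul_add, mul_assoc, mul_smul_comm, smul_mul_assoc]; module)) a1 - a2 - a3
  have g1 : y * y + x * z = t • (z * x + y * y) := by
    have : A * (x * y) - (x * y) * A = t • (A * (y * x) - (y * x) * A) := by
      rw [g]; simp only [mul_smul_comm, smul_mul_assoc, smul_sub]
    simp only [mul_assoc, xA, yA, mul_sub, xA', yA'] at this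
    linear_combination (norm := module) this
  have g2 : z * y + y * z + (y * z + x * z') = t • (z' * x + z * y + (z * y + y * z)) := by
    have : A * (y * y + x * z) - (y * y + x * z) * A = t • (A * (z * x + y * y) - (z * x + y * y) * A) := by
      rw [g1]; simp only [mul_smul_comm, smul_mul_assoc, smul_sub]
    simp only [mul_assoc, xA, yA, zA, mul_sub, xA', yA', zA', mul_add, add_mul] at this
    linear_combination (norm := module) this
  have D2' : ψ * y = y * ψ + b • (t⁻¹ • (A * z) - t • (z * A)) := by rw [← D2]; abel
  have g3 : b • ((t⁻¹ • (A * y) - t • (y * A)) * y + x * (t⁻¹ • (A * z) - t • (z * A))) =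
      b • (t • ((t⁻¹ • (A * z) - t • (z * A)) * x + y * (t⁻¹ • (A * y) - t • (y * A)))) := by
    have a1 : ψ * (x * y) - (x * y) * ψ = t • (ψ * (y * x) - (y * x) * ψ) := by
      rw [g]; simp only [mul_smul_comm, smul_mul_assoc, smul_sub]
    have a2 : ψ * (x * y) = (x * ψ + b • (t⁻¹ • (A * y) - t • (y * A))) * y := by
      rw [← hD', mul_assoc]
    have a3 : x * (ψ * y) = x * (y * ψ + b • (t⁻¹ • (A * z) - t • (z * A))) := by rw [D2']
    have a4 : ψ * (y * x) = (y * ψ + b • (t⁻¹ • (A * z) - t • (z * A))) * x := by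
      rw [← D2', mul_assoc]
    have a5 : y * (ψ * x) = y * (x * ψ + b • (t⁻¹ • (A * y) - t • (y * A))) := by rw [hD']
    linear_combination (norm := (simp only [mul_add, add_mul, mul_sub, sub_mul, smul_sub, smul_add, mul_assoc, mul_smul_comm, smul_mul_assoc]; module)) a1 - a2 - a3 + t • a4 + t • a5
  have g4 := smul_right_injective R hb g3
  have i1 : t * t⁻¹ = 1 := mul_inv_cancel₀ ht
  have i2 : t⁻¹ * t = 1 := inv_mul_cancel₀ ht
  have yz : y * z = t • (z * y) := by
    have g5 := congrArg (fun r => t • r) g4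
    have g1A := congrArg (fun r => A * r) g1
    simp only [mul_add, add_mul, mul_sub, sub_mul, smul_sub, smul_add, mul_assoc, mul_smul_comm, smul_mul_assoc, xA, yA, zA, xA', yA', zA', smul_smul, i1, i2, one_smul] at g5 g1A
    apply smul_right_injective R h2
    simp only [smul_smul]
    linear_combination (norm := skip) (-1 : ℤ) • g5 + (1 - t ^ 2) • g1A + (t ^ 2) • g2
    match_scalars <;> field_simp <;> ring
  refine ⟨D2, ?_, yz, ?_⟩
  · linear_combination (norm := module) g1
  · linear_combination (norm := module) g2 + (t - 2) • yz
end Part1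

/-- Straightening relations among `u₀, u₁, u₂, u₃`. -/
structure QRel {K R : Type*} [Field K] [Ring R] [Algebra K R] (q : K) (u0 u1 u2 u3 : R) : Prop where
  r01 : u0 * u1 = q ^ (-2 : ℤ) • (u1 * u0)
  r12 : u1 * u2 = q ^ (-2 : ℤ) • (u2 * u1)
  r23 : u2 * u3 = q ^ (-2 : ℤ) • (u3 * u2)
  r02 : u0 * u2 = q ^ (-2 : ℤ) • (u2 * u0) + (q ^ (-2 : ℤ) - 1) • (u1 * u1)
  r13 : u1 * u3 = q ^ (-2 : ℤ) • (u3 * u1) + (q ^ (-2 : ℤ) - 1) • (u2 * u2)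
  r03 : u0 * u3 = q ^ (-2 : ℤ) • (u3 * u0) + (q ^ (-4 : ℤ) - 1) • (u2 * u1)

theorem aeval_qq_ne {p : Polynomial ℚ} (hp : p ≠ 0) : Polynomial.aeval qq p ≠ 0 := by
  have : Polynomial.aeval qq p = algebraMap (Polynomial ℚ) (RatFunc ℚ) p := by
    rw [qq, RatFunc.X, Polynomial.aeval_algebraMap_apply, Polynomial.aeval_X_left_apply]
  rw [this]
  exact (map_ne_zero_iff _ (RatFunc.algebraMap_injective ℚ)).mpr hp

theorem qq_ne : qq ≠ 0 := RatFunc.X_ne_zero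

theorem qq_pow_ne_one {m : ℕ} (hm : m ≠ 0) : qq ^ m ≠ 1 := by
  have h : (Polynomial.X ^ m - 1 : Polynomial ℚ) ≠ 0 := Polynomial.X_pow_sub_C_ne_zero (Nat.pos_of_ne_zero hm) 1
  have := aeval_qq_ne h
  simp only [map_sub, map_pow, Polynomial.aeval_X, map_one] at this
  exact sub_ne_zero.mp this

theorem U_serre1 : E1 ^ 3 * E2 - box3 • (E1 ^ 2 * E2 * E1)
        + box3 • (E1 * E2 * E1 ^ 2) - E2 * E1 ^ 3 = 0 := by
  have := RingQuot.mkAlgHom_rel F SerreRel.rel1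
  simp only [map_sub, map_add, map_mul, map_pow, map_smul, map_zero] at this
  exact this

theorem U_serre2 : E2 ^ 3 * E1 - box3 • (E2 ^ 2 * E1 * E2)
        + box3 • (E2 * E1 * E2 ^ 2) - E1 * E2 ^ 3 = 0 := by
  have := RingQuot.mkAlgHom_rel F SerreRel.rel2
  simp only [map_sub, map_add, map_mul, map_pow, map_smul, map_zero] at this
  exact this

theorem rels_of_serre {K R : Type*} [Field K] [Ring R] [Algebra K R] (q : K) (e f : R) (hq : q ≠ 0)
    (hb : q + q⁻¹ ≠ 0) (h3 : 1 + q⁻¹ ^ 2 + (q⁻¹ ^ 2) ^ 2 ≠ 0) (h2 : 1 + (q⁻¹ ^ 2) ^ 2 ≠ 0)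
    (s1 : e ^ 3 * f - (q ^ 2 + 1 + q⁻¹ ^ 2) • (e ^ 2 * f * e)
        + (q ^ 2 + 1 + q⁻¹ ^ 2) • (e * f * e ^ 2) - f * e ^ 3 = 0)
    (s2 : f ^ 3 * e - (q ^ 2 + 1 + q⁻¹ ^ 2) • (f ^ 2 * e * f)
        + (q ^ 2 + 1 + q⁻¹ ^ 2) • (f * e * f ^ 2) - e * f ^ 3 = 0)
    (A v1 v2 v3 : R) (hA : A = (q + q⁻¹)⁻¹ • (f * e - q⁻¹ ^ 2 • (e * f)))
    (hv1 : v1 = A * e - e * A) (hv2 : v2 = A * v1 - v1 * A) (hv3 : v3 = A * v2 - v2 * A) :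
    QRel q e v1 v2 v3 := by
  have hb' : (q + q⁻¹) • A = f * e - q⁻¹ ^ 2 • (e * f) := by
    rw [hA, smul_smul, mul_inv_cancel₀ hb, one_smul]
  have ht : q⁻¹ ^ 2 ≠ 0 := pow_ne_zero _ (inv_ne_zero hq)
  have g01 : e * v1 = q⁻¹ ^ 2 • (v1 * e) := by
    apply smul_right_injective R hb
    show (q + q⁻¹) • (e * v1) = (q + q⁻¹) • q⁻¹ ^ 2 • (v1 * e)
    have a1 : (q + q⁻¹) • (e * v1) = e * ((q + q⁻¹) • A) * e - e * e * ((q + q⁻¹) • A) := by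
      rw [hv1]; simp only [mul_sub, smul_sub, mul_smul_comm, smul_mul_assoc, mul_assoc]
    have a2 : (q + q⁻¹) • q⁻¹ ^ 2 • (v1 * e) = q⁻¹ ^ 2 • (((q + q⁻¹) • A) * e * e - e * ((q + q⁻¹) • A) * e) := by
      rw [hv1, smul_comm]; simp only [sub_mul, smul_sub, mul_smul_comm, smul_mul_assoc, mul_assoc]
    rw [a1, a2, hb']
    simp only [pow_succ, pow_zero, one_mul] at s1
    simp only [mul_sub, sub_mul, smul_sub, mul_smul_comm, smul_mul_assoc, mul_assoc] at s1 ⊢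
    linear_combination (norm := skip) (q⁻¹ ^ 2) • s1
    match_scalars <;> field_simp <;> ring
  have g2 : q⁻¹ ^ 2 • (f * (A * f - f * A)) = (A * f - f * A) * f := by
    apply smul_right_injective R hb
    show (q + q⁻¹) • q⁻¹ ^ 2 • (f * (A * f - f * A)) = (q + q⁻¹) • ((A * f - f * A) * f)
    have a1 : (q + q⁻¹) • ((A * f - f * A) * f) = ((q + q⁻¹) • A) * f * f - f * ((q + q⁻¹) • A) * f := by
      simp only [sub_mul, smul_sub, mul_smul_comm, smul_mul_assoc, mul_assoc]
    have a2 : (q + q⁻¹) • q⁻¹ ^ 2 • (f * (A * f - f * A)) = q⁻¹ ^ 2 • (f * ((q + q⁻¹) • A) * f - f * f * ((q + q⁻¹) • A)) := by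
      rw [smul_comm]; simp only [mul_sub, smul_sub, mul_smul_comm, smul_mul_assoc, mul_assoc]
    rw [a1, a2, hb']
    simp only [pow_succ, pow_zero, one_mul] at s2
    simp only [mul_sub, sub_mul, smul_sub, mul_smul_comm, smul_mul_assoc, mul_assoc] at s2 ⊢
    linear_combination (norm := skip) (-q⁻¹ ^ 2) • s2
    match_scalars <;> field_simp <;> ring
  obtain ⟨ψ, hD, hψA⟩ := serre_core (q⁻¹ ^ 2) (q + q⁻¹) ht hb h3 e f A v1 _ (by rw [hb']; abel) hv1 rfl g01 g2
  obtain ⟨D1, r02, r12, r03⟩ := chain_step (q⁻¹ ^ 2) (q + q⁻¹) ht hb h2 ψ A e v1 v2 v3 hψA hv1 hv2 hv3 hD g01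
  obtain ⟨D2, r13, r23, -⟩ := chain_step (q⁻¹ ^ 2) (q + q⁻¹) ht hb h2 ψ A v1 v2 v3 _ hψA hv2 hv3 rfl D1 r12
  have e1 : q ^ (-2 : ℤ) = q⁻¹ ^ 2 := by
    rw [zpow_neg, inv_pow]; norm_cast
  have e2 : q ^ (-4 : ℤ) = (q⁻¹ ^ 2) ^ 2 := by
    rw [zpow_neg, inv_pow, inv_pow, ← pow_mul]; norm_cast
  refine ⟨?_, ?_, ?_, ?_, ?_, ?_⟩ <;> rw [e1] <;> first | assumption | (rw [e2]; assumption)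

theorem qq_facts : qq + qq⁻¹ ≠ 0 ∧ 1 + qq⁻¹ ^ 2 + (qq⁻¹ ^ 2) ^ 2 ≠ 0 ∧ 1 + (qq⁻¹ ^ 2) ^ 2 ≠ 0 := by
  have hq := qq_ne
  have k1 : qq ^ 2 + 1 ≠ 0 := by
    intro h
    apply qq_pow_ne_one (m := 4) (by norm_num)
    linear_combination (qq ^ 2 - 1) * h
  have k2 : qq ^ 4 + qq ^ 2 + 1 ≠ 0 := by
    intro h
    apply qq_pow_ne_one (m := 6) (by norm_num)
    linear_combination (qq ^ 2 - 1) * h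
  have k3 : qq ^ 4 + 1 ≠ 0 := by
    intro h
    apply qq_pow_ne_one (m := 8) (by norm_num)
    linear_combination (qq ^ 4 - 1) * h
  refine ⟨?_, ?_, ?_⟩
  · intro h; apply k1; field_simp at h; linear_combination h
  · intro h; apply k2; field_simp at h; linear_combination h
  · intro h; apply k3; field_simp at h; linear_combination h

theorem QRel.scale {K R : Type*} [Field K] [Ring R] [Algebra K R] {q : K} {u0 u1 u2 u3 : R}
    (h : QRel q u0 u1 u2 u3) (c : K) : QRel q u0 (c ^ 2 • u1) (c ^ 4 • u2) (c ^ 6 • u3) := by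
  obtain ⟨a, b, d, e, f, g⟩ := h
  refine ⟨?_, ?_, ?_, ?_, ?_, ?_⟩ <;>
    simp only [mul_smul_comm, smul_mul_assoc, a, b, d, e, f, g] <;> module

theorem qrel_S : QRel qq us0 us1 us2 us3 := by
  obtain ⟨hb, h3, h2⟩ := qq_facts
  have h := (rels_of_serre qq E1 E2 qq_ne hb h3 h2 U_serre1 U_serre2 Aelt v1 v2 v3 rfl rfl rfl rfl).scale
    (1 - qq⁻¹ ^ 2)⁻¹
  obtain ⟨a, b, d, e, f, g⟩ := h
  exact ⟨Subtype.ext a, Subtype.ext b, Subtype.ext d, Subtype.ext e, Subtype.ext f, Subtype.ext g⟩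

section Part3
variable {K R : Type*} [Field K] [Ring R] [Algebra K R]

/-- `q`-commutation: `x y = q^a y x`. -/
def QC (q : K) (a : ℤ) (x y : R) : Prop := x * y = q ^ a • (y * x)

theorem QC.asc {q : K} {a : ℤ} {x y : R} (h : QC q a x y) (z : R) : x * (y * z) = q ^ a • (y * (x * z)) := by
  rw [← mul_assoc, h, smul_mul_assoc, mul_assoc]

theorem QC.rfl' (q : K) (x : R) : QC q 0 x x := by simp [QC]

theorem QC.symm' {q : K} (hq : q ≠ 0) {a : ℤ} {x y : R} (h : QC q a x y) : QC q (-a) y x := by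
  unfold QC at *
  rw [h, smul_smul, ← zpow_add₀ hq]; simp

theorem QC.mulL {q : K} (hq : q ≠ 0) {a b : ℤ} {x y z : R} (h : QC q a x z) (h' : QC q b y z) :
    QC q (a + b) (x * y) z := by
  unfold QC at *
  rw [mul_assoc, h', mul_smul_comm, ← mul_assoc, h, smul_mul_assoc, smul_smul, zpow_add₀ hq, mul_assoc, mul_comm]

theorem QC.mulR {q : K} (hq : q ≠ 0) {a b : ℤ} {x y z : R} (h : QC q a x y) (h' : QC q b x z) :
    QC q (a + b) x (y * z) := by
  unfold QC at *
  rw [← mul_assoc, h, smul_mul_assoc, mul_assoc, h', mul_smul_comm, smul_smul, zpow_add₀ hq, mul_assoc]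

theorem QC.oneL {q : K} {x : R} : QC q 0 1 x := by simp [QC]
theorem QC.oneR {q : K} {x : R} : QC q 0 x 1 := by simp [QC]

theorem QC.cast {q : K} {a b : ℤ} {x y : R} (h : QC q a x y) (e : a = b) : QC q b x y := e ▸ h

theorem QC.powL {q : K} (hq : q ≠ 0) {a : ℤ} {x y : R} (h : QC q a x y) (n : ℕ) : QC q (n * a) (x ^ n) y := by
  induction n with
  | zero => simpa using QC.oneL
  | succ n ih => rw [pow_succ]; exact (ih.mulL hq h).cast (by push_cast; ring)

theorem QC.powR {q : K} (hq : q ≠ 0) {a : ℤ} {x y : R} (h : QC q a x y) (n : ℕ) : QC q (n * a) x (y ^ n) := by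
  induction n with
  | zero => simpa using QC.oneR
  | succ n ih => rw [pow_succ]; exact (ih.mulR hq h).cast (by push_cast; ring)

theorem QC.subR {q : K} {a : ℤ} {x y z : R} (c : K) (h : QC q a x y) (h' : QC q a x z) :
    QC q a x (y - c • z) := by
  unfold QC at *
  rw [mul_sub, sub_mul, h, mul_smul_comm, h', smul_mul_assoc, smul_sub, smul_comm]

theorem QC.subL {q : K} {a : ℤ} {x y z : R} (c : K) (h : QC q a x z) (h' : QC q a y z) :
    QC q a (x - c • y) z := by
  unfold QC at *
  rw [mul_sub, sub_mul, h, mul_smul_comm, smul_mul_assoc, h', smul_sub, smul_comm]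

/-- All the `q`-commutation relations. -/
structure QR2 (q : K) (u0 u1 u2 u3 p1 p0 : R) : Prop where
  hq : q ≠ 0
  c01 : QC q (-2) u0 u1
  c12 : QC q (-2) u1 u2
  c23 : QC q (-2) u2 u3
  p1u3 : QC q (-2) p1 u3
  p1u2 : QC q 0 p1 u2
  u1p1 : QC q (-2) u1 p1
  u0p0 : QC q (-2) u0 p0
  u1p0 : QC q 0 u1 p0
  p0u2 : QC q (-2) p0 u2
  p0p1 : QC q (-4) p0 p1
  e31 : u3 * u1 = p1 + q ^ (2 : ℤ) • (u2 * u2)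
  e13 : u1 * u3 = q ^ (-2 : ℤ) • p1 + q ^ (-2 : ℤ) • (u2 * u2)
  e20 : u2 * u0 = p0 + q ^ (2 : ℤ) • (u1 * u1)
  e02 : u0 * u2 = q ^ (-2 : ℤ) • p0 + q ^ (-2 : ℤ) • (u1 * u1)
  e03 : u0 * u3 = q ^ (-2 : ℤ) • (u3 * u0) + (q ^ (-4 : ℤ) - 1) • (u2 * u1)

theorem QRel.toQR2 {q : K} (hq : q ≠ 0) {u0 u1 u2 u3 : R} (h : QRel q u0 u1 u2 u3) :
    QR2 q u0 u1 u2 u3 (u3 * u1 - q ^ 2 • u2 ^ 2) (u2 * u0 - q ^ 2 • u1 ^ 2) := by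
  obtain ⟨r01, r12, r23, r02, r13, r03⟩ := h
  have c01 : QC q (-2) u0 u1 := r01
  have c12 : QC q (-2) u1 u2 := r12
  have c23 : QC q (-2) u2 u3 := r23
  have r02' : ∀ z, u0 * (u2 * z) = q ^ (-2 : ℤ) • (u2 * (u0 * z)) + (q ^ (-2 : ℤ) - 1) • (u1 * (u1 * z)) := by
    intro z; rw [← mul_assoc, r02]; simp only [add_mul, smul_mul_assoc, mul_assoc]
  have r13' : ∀ z, u1 * (u3 * z) = q ^ (-2 : ℤ) • (u3 * (u1 * z)) + (q ^ (-2 : ℤ) - 1) • (u2 * (u2 * z)) := by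
    intro z; rw [← mul_assoc, r13]; simp only [add_mul, smul_mul_assoc, mul_assoc]
  have r03' : ∀ z, u0 * (u3 * z) = q ^ (-2 : ℤ) • (u3 * (u0 * z)) + (q ^ (-4 : ℤ) - 1) • (u2 * (u1 * z)) := by
    intro z; rw [← mul_assoc, r03]; simp only [add_mul, smul_mul_assoc, mul_assoc]
  have p1u2 : QC q 0 (u3 * u1 - q ^ 2 • u2 ^ 2) u2 := by
    refine QC.subL _ ?_ ?_
    · exact ((c23.symm' hq).mulL hq c12).cast (by norm_num)
    · exact ((QC.rfl' q u2).powL hq 2).cast (by norm_num)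
  have u1p0 : QC q 0 u1 (u2 * u0 - q ^ 2 • u1 ^ 2) := by
    refine QC.subR _ ?_ ?_
    · exact (c12.mulR hq (c01.symm' hq)).cast (by norm_num)
    · exact ((QC.rfl' q u1).powR hq 2).cast (by norm_num)
  have p1u3 : QC q (-2) (u3 * u1 - q ^ 2 • u2 ^ 2) u3 := by
    unfold QC
    simp only [pow_two, mul_sub, sub_mul, mul_smul_comm, smul_mul_assoc, mul_assoc, r13, r23, c23.asc, mul_add]
    match_scalars <;> field_simp <;> ring
  have u1p1 : QC q (-2) u1 (u3 * u1 - q ^ 2 • u2 ^ 2) := by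
    unfold QC
    simp only [pow_two, mul_sub, sub_mul, mul_smul_comm, smul_mul_assoc, mul_assoc, r12, c12.asc, r13', mul_add]
    match_scalars <;> field_simp <;> ring
  have u0p0 : QC q (-2) u0 (u2 * u0 - q ^ 2 • u1 ^ 2) := by
    unfold QC
    simp only [pow_two, mul_sub, sub_mul, mul_smul_comm, smul_mul_assoc, mul_assoc, r01, c01.asc, r02', mul_add]
    match_scalars <;> field_simp <;> ring
  have p0u2 : QC q (-2) (u2 * u0 - q ^ 2 • u1 ^ 2) u2 := by
    unfold QC
    simp only [pow_two, mul_sub, sub_mul, mul_smul_comm, smul_mul_assoc, mul_assoc, r12, c12.asc, r02, mul_add]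
    match_scalars <;> field_simp <;> ring
  have p0u3 : QC q (-4) (u2 * u0 - q ^ 2 • u1 ^ 2) u3 := by
    unfold QC
    simp only [pow_two, mul_sub, sub_mul, mul_smul_comm, smul_mul_assoc, mul_assoc, r12, c12.asc, r03, r13, r13', c23.asc, mul_add]
    match_scalars <;> field_simp <;> ring
  refine ⟨hq, c01, c12, c23, p1u3, p1u2, u1p1, u0p0, u1p0, p0u2, ?_, ?_, ?_, ?_, ?_, r03⟩
  · refine QC.subR _ ?_ ?_
    · exact (p0u3.mulR hq (u1p0.symm' hq)).cast (by norm_num)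
    · exact (p0u2.powR hq 2).cast (by norm_num)
  · rw [pow_two u2, show (q ^ (2:ℤ)) = q ^ 2 from by norm_cast]; abel
  · rw [r13, pow_two u2]; match_scalars <;> field_simp; ring
  · rw [pow_two u1, show (q ^ (2:ℤ)) = q ^ 2 from by norm_cast]; abel
  · rw [r02, pow_two u1]; match_scalars <;> field_simp; ring

end Part3

section Part4
variable {K R : Type*} [Field K] [Ring R] [Algebra K R]

/-- Torus monomials. -/
def TT (u1 u2 p1 p0 : R) (a k l b : ℕ) : R := p1 ^ a * u2 ^ (2 * k) * u1 ^ (2 * l) * p0 ^ b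

namespace QR2
variable {q : K} {u0 u1 u2 u3 p1 p0 : R} (h : QR2 q u0 u1 u2 u3 p1 p0)
include h

theorem T_u1 (a k l b : ℕ) : QC q (2 * a + 4 * k) (TT u1 u2 p1 p0 a k l b) u1 := by
  refine QC.cast (((((h.u1p1.symm' h.hq).powL h.hq a).mulL h.hq ((h.c12.symm' h.hq).powL h.hq (2 * k))).mulL h.hq
    ((QC.rfl' q u1).powL h.hq _)).mulL h.hq ((h.u1p0.symm' h.hq).powL h.hq _)) ?_
  push_cast; ring

theorem T_u2 (a k l b : ℕ) : QC q (-2 * b - 4 * l) (TT u1 u2 p1 p0 a k l b) u2 := by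
  refine QC.cast ((((h.p1u2.powL h.hq a).mulL h.hq ((QC.rfl' q u2).powL h.hq (2 * k))).mulL h.hq
    (h.c12.powL h.hq _)).mulL h.hq (h.p0u2.powL h.hq _)) ?_
  push_cast; ring

theorem T_p1 (a k l b : ℕ) : QC q (-4 * b - 4 * l) (TT u1 u2 p1 p0 a k l b) p1 := by
  refine QC.cast (((((QC.rfl' q p1).powL h.hq a).mulL h.hq ((h.p1u2.symm' h.hq).powL h.hq (2 * k))).mulL h.hq
    (h.u1p1.powL h.hq _)).mulL h.hq (h.p0p1.powL h.hq _)) ?_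
  push_cast; ring

theorem T_p0 (a k l b : ℕ) : QC q (4 * a + 4 * k) (TT u1 u2 p1 p0 a k l b) p0 := by
  refine QC.cast (((((h.p0p1.symm' h.hq).powL h.hq a).mulL h.hq ((h.p0u2.symm' h.hq).powL h.hq (2 * k))).mulL h.hq
    (h.u1p0.powL h.hq _)).mulL h.hq ((QC.rfl' q p0).powL h.hq _)) ?_
  push_cast; ring

omit h in
theorem p1T (a k l b : ℕ) : p1 * TT u1 u2 p1 p0 a k l b = TT u1 u2 p1 p0 (a + 1) k l b := by
  simp only [TT, pow_succ' p1, mul_assoc]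

omit h in
theorem Tp0 (a k l b : ℕ) : TT u1 u2 p1 p0 a k l b * p0 = TT u1 u2 p1 p0 a k l (b + 1) := by
  simp only [TT, pow_succ p0, mul_assoc]

theorem u2T (a k l b : ℕ) : u2 * (u2 * TT u1 u2 p1 p0 a k l b) = TT u1 u2 p1 p0 a (k + 1) l b := by
  have e : u2 * p1 ^ a = p1 ^ a * u2 := by
    have := (h.p1u2.symm' h.hq).powR h.hq a
    simpa [QC] using this
  have e' : ∀ z, u2 * (p1 ^ a * z) = p1 ^ a * (u2 * z) := fun z => by rw [← mul_assoc, e, mul_assoc]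
  simp only [TT, mul_assoc, e', show 2 * (k + 1) = 2 * k + 1 + 1 from by ring, pow_succ' u2]

theorem Tu1 (a k l b : ℕ) : TT u1 u2 p1 p0 a k l b * u1 * u1 = TT u1 u2 p1 p0 a k (l + 1) b := by
  have e : p0 ^ b * u1 = u1 * p0 ^ b := by
    have := (h.u1p0.symm' h.hq).powL h.hq b
    simpa [QC] using this
  simp only [TT, mul_assoc, e]
  simp only [show 2 * (l + 1) = 2 * l + 1 + 1 from by ring, pow_succ u1, mul_assoc]

theorem t1 (a k l b : ℕ) : u3 * TT u1 u2 p1 p0 a k l b * u1 =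
    q ^ (2 * a + 4 * k : ℤ) • TT u1 u2 p1 p0 (a + 1) k l b + q ^ (2 * a + 4 * k + 2 : ℤ) • TT u1 u2 p1 p0 a (k + 1) l b := by
  rw [mul_assoc, h.T_u1, mul_smul_comm, ← mul_assoc, h.e31, add_mul, p1T, smul_mul_assoc, mul_assoc, h.u2T,
    smul_add, smul_smul, ← zpow_add₀ h.hq]

theorem t2 (a k l b : ℕ) : p1 * (u2 * u2) * TT u1 u2 p1 p0 a k l b * (u1 * u1) =
    TT u1 u2 p1 p0 (a + 1) (k + 1) (l + 1) b := by
  rw [← mul_assoc, mul_assoc _ (TT _ _ _ _ _ _ _ _), mul_assoc _ (_ * _), h.Tu1, mul_assoc, mul_assoc, h.u2T, p1T]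

theorem t3 (a k l b : ℕ) : u2 * TT u1 u2 p1 p0 a k l b * u0 =
    q ^ (2 * b + 4 * l : ℤ) • TT u1 u2 p1 p0 a k l (b + 1) + q ^ (2 * b + 4 * l + 2 : ℤ) • TT u1 u2 p1 p0 a k (l + 1) b := by
  rw [(h.T_u2 a k l b).symm' h.hq, smul_mul_assoc, mul_assoc, h.e20, mul_add, Tp0, mul_smul_comm, ← mul_assoc, h.Tu1,
    smul_add, smul_smul, ← zpow_add₀ h.hq]
  ring_nf

theorem t4 (a k l b : ℕ) : (u2 * u2) * TT u1 u2 p1 p0 a k l b * (u1 * u1 * p0) =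
    TT u1 u2 p1 p0 a (k + 1) (l + 1) (b + 1) := by
  rw [mul_assoc u2, h.u2T, ← mul_assoc, ← mul_assoc, h.Tu1, Tp0]

theorem t5 (a k l b : ℕ) : TT u1 u2 p1 p0 a k l b * p1 =
    q ^ (-4 * b - 4 * l : ℤ) • TT u1 u2 p1 p0 (a + 1) k l b := by
  rw [h.T_p1, p1T]

theorem t6 (a k l b : ℕ) : TT u1 u2 p1 p0 a k l b * (u2 * u2) =
    q ^ (-4 * b - 8 * l : ℤ) • TT u1 u2 p1 p0 a (k + 1) l b := by
  rw [← mul_assoc, h.T_u2, smul_mul_assoc, mul_assoc, h.T_u2, mul_smul_comm, h.u2T, smul_smul, ← zpow_add₀ h.hq]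
  ring_nf

theorem t7 (a k l b : ℕ) : u2 * TT u1 u2 p1 p0 a k l b * (u1 * u1) * (u2 * p1) =
    q ^ (-8 - 6 * b - 8 * l : ℤ) • TT u1 u2 p1 p0 (a + 1) (k + 1) (l + 1) b := by
  rw [← mul_assoc _ u1, mul_assoc u2, mul_assoc u2, h.Tu1, mul_assoc, ← mul_assoc _ u2, h.T_u2, smul_mul_assoc, mul_assoc,
    h.t5, mul_smul_comm, mul_smul_comm, mul_smul_comm, h.u2T, smul_smul, ← zpow_add₀ h.hq]
  push_cast; ring_nf

theorem t8 (a k l b : ℕ) : p0 * TT u1 u2 p1 p0 a k l b =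
    q ^ (-4 * a - 4 * k : ℤ) • TT u1 u2 p1 p0 a k l (b + 1) := by
  rw [(h.T_p0 a k l b).symm' h.hq, Tp0]
  ring_nf

theorem t9 (a k l b : ℕ) : (u1 * u1) * TT u1 u2 p1 p0 a k l b =
    q ^ (-4 * a - 8 * k : ℤ) • TT u1 u2 p1 p0 a k (l + 1) b := by
  rw [mul_assoc, (h.T_u1 a k l b).symm' h.hq, mul_smul_comm, ← mul_assoc, (h.T_u1 a k l b).symm' h.hq, smul_mul_assoc, h.Tu1,
    smul_smul, ← zpow_add₀ h.hq]
  ring_nf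

theorem t10 (a k l b : ℕ) : p0 * u1 * (u2 * u2) * TT u1 u2 p1 p0 a k l b * u1 =
    q ^ (-8 - 6 * a - 8 * k : ℤ) • TT u1 u2 p1 p0 a (k + 1) (l + 1) (b + 1) := by
  rw [mul_assoc _ (u2 * u2), mul_assoc u2, h.u2T, mul_assoc p0, (h.T_u1 a (k + 1) l b).symm' h.hq, mul_smul_comm, smul_mul_assoc,
    ← mul_assoc p0, h.t8, smul_mul_assoc, smul_mul_assoc, h.Tu1, smul_smul, ← zpow_add₀ h.hq]
  push_cast; ring_nf

end QR2
end Part4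

section Part5
variable {K R : Type*} [Field K] [Ring R] [Algebra K R]

/-- generic quantum integer -/
def gi (q : K) (m : ℤ) : K := (q ^ m - q ^ (-m)) / (q - q⁻¹)

/-- generic quantum binomial -/
def gb (q : K) (m : ℤ) (i : ℕ) : K :=
  (∏ j ∈ Finset.range i, gi q (m - j)) / ∏ j ∈ Finset.range i, gi q ((j : ℤ) + 1)

theorem gb_zero (q : K) (m : ℤ) : gb q m 0 = 1 := by simp [gb]

theorem gb_van (q : K) (m : ℤ) (i : ℕ) (h0 : 0 ≤ m) (h1 : m < i) : gb q m i = 0 := by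
  lift m to ℕ using h0
  have : ∏ j ∈ Finset.range i, gi q ((m : ℤ) - j) = 0 := by
    apply Finset.prod_eq_zero (i := m)
    · simpa using h1
    · simp [gi]
  rw [gb, this, zero_div]

theorem gi_id (q : K) (hq : q ≠ 0) (s : ℤ) (hs : s = 1 ∨ s = -1) (m i : ℤ) :
    gi q (m + 1) = q ^ (s * (i + 1)) * gi q (m - i) + q ^ (-s * (m - i)) * gi q (i + 1) := by
  unfold gi
  rw [← mul_div_assoc, ← mul_div_assoc, ← add_div]
  congr 1
  rw [mul_sub, mul_sub, ← zpow_add₀ hq, ← zpow_add₀ hq, ← zpow_add₀ hq, ← zpow_add₀ hq]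
  rcases hs with rfl | rfl <;> ring_nf

theorem pascal (q : K) (hq : q ≠ 0) (hn : ∀ i : ℕ, gi q (i + 1) ≠ 0) (s : ℤ) (hs : s = 1 ∨ s = -1) (m : ℤ) (i : ℕ) :
    gb q (m + 1) (i + 1) = q ^ (s * (i + 1)) * gb q m (i + 1) + q ^ (-s * (m - i)) * gb q m i := by
  unfold gb
  have e1 : ∏ j ∈ Finset.range (i + 1), gi q (m + 1 - j) = (∏ j ∈ Finset.range i, gi q (m - j)) * gi q (m + 1) := by
    rw [Finset.prod_range_succ']
    congr 1
    · apply Finset.prod_congr rfl; intro j _; congr 1; push_cast; ring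
    · congr 1; simp
  have e2 : ∏ j ∈ Finset.range i, gi q ((j : ℤ) + 1) ≠ 0 := Finset.prod_ne_zero_iff.mpr fun j _ => hn j
  have e3 := hn i
  rw [e1, Finset.prod_range_succ, Finset.prod_range_succ, gi_id q hq s hs m i]
  field_simp

theorem comb (q : K) (hq : q ≠ 0) {e e1 e2 e3 s1 s2 s3 s4 : ℤ} (x y z w : K) (hy : e + s1 = e1) (hw : e + s2 = e2 + s3)
    (hz : e2 + s4 = e3) : q ^ e * (x * (q ^ s1 * y + q ^ s2 * w)) =
      q ^ e1 * (x * y) + q ^ e2 * ((q ^ s3 * x + q ^ s4 * z) * w) - q ^ e3 * (z * w) := by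
  have h1 : q ^ e * q ^ s2 = q ^ e2 * q ^ s3 := by rw [← zpow_add₀ hq, ← zpow_add₀ hq, hw]
  rw [← hy, ← hz, zpow_add₀ hq, zpow_add₀ hq]
  linear_combination x * w * h1

theorem comb' (q : K) (hq : q ≠ 0) {e e1 e2 e3 s1 s2 s3 s4 : ℤ} (x y z w : K) (hy : e + s1 = e1) (hw : e + s2 = e2 + s3)
    (hz : e2 + s4 = e3) : q ^ e * ((q ^ s1 * y + q ^ s2 * w) * x) =
      q ^ e1 * (y * x) + q ^ e2 * (w * (q ^ s3 * x + q ^ s4 * z)) - q ^ e3 * (w * z) := by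
  linear_combination comb q hq x y z w hy hw hz

theorem comb1 (q : K) (hq : q ≠ 0) {e e1 e2 s1 s2 : ℤ} (x y : K) (hx : e + s1 = e1) (hy : e + s2 = e2) :
    q ^ e * (q ^ s1 * x + q ^ s2 * y) = q ^ e1 * x + q ^ e2 * y := by
  rw [← hx, ← hy, zpow_add₀ hq, zpow_add₀ hq]
  ring

theorem zmerge (q : K) (hq : q ≠ 0) (a b : ℤ) (x : K) : q ^ a * (q ^ b * x) = q ^ (a + b) * x := by
  rw [zpow_add₀ hq, mul_assoc]

def cQ (q : K) (n k l : ℕ) : K :=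
  q ^ ((n : ℤ) * (n - 3) + k * (n + 1) + l * (n + 1) - 2 * k * l) * (gb q (n - k) l * gb q (n - l) k)

def cR (q : K) (n k l : ℕ) : K :=
  q ^ ((n : ℤ) * (n - 2) + k * (n + 2) + l * (n + 1) - 2 * k * l) * (gb q (n - k) l * gb q (n + 1 - l) k)

theorem sumG (a0 b : ℕ) (c A B D : ℕ → ℕ → K) (f : ℕ → ℕ → R)
    (h0 : ∀ l, c 0 l = A 0 l) (h1 : ∀ k, c (k + 1) 0 = A (k + 1) 0 + B k 0)
    (h2 : ∀ k l, c (k + 1) (l + 1) = A (k + 1) (l + 1) + B k (l + 1) - D k l)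
    (hA : ∀ l < b + 1, A (a0 + 1) l = 0) (hD : ∀ l < b, D a0 l = 0) :
    ∑ k ∈ Finset.range (a0 + 2), ∑ l ∈ Finset.range (b + 1), c k l • f k l =
    ∑ k ∈ Finset.range (a0 + 1), ∑ l ∈ Finset.range (b + 1), (A k l • f k l + B k l • f (k + 1) l)
    - ∑ k ∈ Finset.range a0, ∑ l ∈ Finset.range b, D k l • f (k + 1) (l + 1) := by
  have s1 : ∀ k, ∑ l ∈ Finset.range (b + 1), c (k + 1) l • f (k + 1) l =
      ∑ l ∈ Finset.range (b + 1), A (k + 1) l • f (k + 1) l + ∑ l ∈ Finset.range (b + 1), B k l • f (k + 1) l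
      - ∑ l ∈ Finset.range b, D k l • f (k + 1) (l + 1) := by
    intro k
    rw [Finset.sum_range_succ', Finset.sum_range_succ' (fun l => A (k + 1) l • _),
      Finset.sum_range_succ' (fun l => B k l • _), h1]
    simp only [h2, add_smul, sub_smul, Finset.sum_add_distrib, Finset.sum_sub_distrib]
    abel
  have s2 : ∑ l ∈ Finset.range (b + 1), A (a0 + 1) l • f (a0 + 1) l = 0 :=
    Finset.sum_eq_zero fun l hl => by rw [hA l (Finset.mem_range.mp hl), zero_smul]
  have s3 : ∑ l ∈ Finset.range b, D a0 l • f (a0 + 1) (l + 1) = 0 :=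
    Finset.sum_eq_zero fun l hl => by rw [hD l (Finset.mem_range.mp hl), zero_smul]
  have s4 : ∑ k ∈ Finset.range (a0 + 1), ∑ l ∈ Finset.range (b + 1), A k l • f k l =
      ∑ k ∈ Finset.range (a0 + 1), ∑ l ∈ Finset.range (b + 1), A (k + 1) l • f (k + 1) l
      + ∑ l ∈ Finset.range (b + 1), A 0 l • f 0 l := by
    rw [← Finset.sum_range_succ' (fun k => ∑ l ∈ Finset.range (b + 1), A k l • f k l) (a0 + 1),
      Finset.sum_range_succ _ (a0 + 1), s2, add_zero]
  rw [Finset.sum_range_succ']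
  simp only [s1, h0, Finset.sum_add_distrib, Finset.sum_sub_distrib, s4]
  rw [Finset.sum_range_succ (fun k => ∑ l ∈ Finset.range b, D k l • f (k + 1) (l + 1)), s3]
  abel

def Qs (q : K) (u1 u2 p1 p0 : R) (n : ℕ) : R :=
  ∑ k ∈ Finset.range (n + 1), ∑ l ∈ Finset.range (n + 1), cQ q n k l • TT u1 u2 p1 p0 (n - k) k l (n - l)

def Rs (q : K) (u1 u2 p1 p0 : R) (n : ℕ) : R :=
  ∑ k ∈ Finset.range (n + 2), ∑ l ∈ Finset.range (n + 1), cR q n k l • TT u1 u2 p1 p0 (n + 1 - k) k l (n - l)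

section coef
variable (q : K) (hq : q ≠ 0) (hn : ∀ i : ℕ, gi q (i + 1) ≠ 0)
include hq hn

theorem coefA2 (n k l : ℕ) : cR q (n + 1) (k + 1) (l + 1) =
    q ^ ((n : ℤ) + 1 + 2 * (k + 1)) * cQ q (n + 1) (k + 1) (l + 1)
    + q ^ ((n : ℤ) + 1 + 2 * k + 2) * cQ q (n + 1) k (l + 1) - q ^ (5 * n + 3 : ℤ) * cQ q n k l := by
  unfold cR cQ
  simp only [zmerge q hq]
  push_cast
  rw [show ((n : ℤ) + 1 + 1 - (l + 1)) = (n - l) + 1 by ring, show ((n : ℤ) + 1 - (k + 1)) = n - k by ring,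
    show ((n : ℤ) + 1 - (l + 1)) = n - l by ring, show ((n : ℤ) + 1 - k) = n - k + 1 by ring,
    pascal q hq hn 1 (by simp), pascal q hq hn (-1) (by simp)]
  apply comb q hq <;> push_cast <;> ring

theorem coefA1 (n k : ℕ) : cR q (n + 1) (k + 1) 0 =
    q ^ ((n : ℤ) + 1 + 2 * (k + 1)) * cQ q (n + 1) (k + 1) 0
    + q ^ ((n : ℤ) + 1 + 2 * k + 2) * cQ q (n + 1) k 0 := by
  unfold cR cQ
  simp only [zmerge q hq, gb_zero, one_mul]
  push_cast
  rw [show ((n : ℤ) + 1 + 1 - 0) = (n + 1 - 0) + 1 by ring,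
    pascal q hq hn 1 (by simp)]
  apply comb1 q hq <;> push_cast <;> ring

omit hn in
theorem coefA0 (n l : ℕ) : cR q (n + 1) 0 l =
    q ^ ((n : ℤ) + 1 + 2 * 0) * cQ q (n + 1) 0 l := by
  unfold cR cQ
  simp only [zmerge q hq, gb_zero]
  congr 2
  push_cast; ring

theorem coefA'2 (n k l : ℕ) : cR q (n + 1) (k + 1) (l + 1) =
    q ^ ((n : ℤ) + 1) * cQ q (n + 1) (k + 1) (l + 1)
    + q ^ (3 * ((n : ℤ) + 1) + 2 - 4 * (l + 1)) * cQ q (n + 1) k (l + 1) - q ^ (5 * n + 1 - 2 * l : ℤ) * cQ q n k l := by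
  unfold cR cQ
  simp only [zmerge q hq]
  push_cast
  rw [show ((n : ℤ) + 1 + 1 - (l + 1)) = (n - l) + 1 by ring, show ((n : ℤ) + 1 - (k + 1)) = n - k by ring,
    show ((n : ℤ) + 1 - (l + 1)) = n - l by ring, show ((n : ℤ) + 1 - k) = n - k + 1 by ring,
    pascal q hq hn (-1) (by simp), pascal q hq hn 1 (by simp)]
  apply comb q hq <;> push_cast <;> ring

theorem coefA'1 (n k : ℕ) : cR q (n + 1) (k + 1) 0 =
    q ^ ((n : ℤ) + 1) * cQ q (n + 1) (k + 1) 0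
    + q ^ (3 * ((n : ℤ) + 1) + 2 - 4 * 0) * cQ q (n + 1) k 0 := by
  unfold cR cQ
  simp only [zmerge q hq, gb_zero, one_mul]
  push_cast
  rw [show ((n : ℤ) + 1 + 1 - 0) = (n + 1 - 0) + 1 by ring,
    pascal q hq hn (-1) (by simp)]
  apply comb1 q hq <;> push_cast <;> ring

theorem coefB2 (n k l : ℕ) : cQ q (n + 2) (k + 1) (l + 1) =
    q ^ ((n : ℤ) + 1 - 2 + 2 * (l + 1)) * cR q (n + 1) (k + 1) (l + 1)
    + q ^ ((n : ℤ) + 1 + 2 * l) * cR q (n + 1) (k + 1) l - q ^ (5 * (n + 1) - 1 : ℤ) * cR q n k l := by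
  unfold cR cQ
  simp only [zmerge q hq]
  push_cast
  rw [show ((n : ℤ) + 2 - (k + 1)) = (n - k) + 1 by ring, show ((n : ℤ) + 1 - (k + 1)) = n - k by ring,
    show ((n : ℤ) + 2 - (l + 1)) = n + 1 - l by ring, show ((n : ℤ) + 1 + 1 - (l + 1)) = n + 1 - l by ring,
    show ((n : ℤ) + 1 + 1 - l) = n + 1 - l + 1 by ring, pascal q hq hn 1 (by simp), pascal q hq hn (-1) (by simp)]
  apply comb' q hq <;> push_cast <;> ring

theorem coefB'2 (n k l : ℕ) : cQ q (n + 2) (k + 1) (l + 1) =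
    q ^ ((n : ℤ) + 1 - 2) * cR q (n + 1) (k + 1) (l + 1)
    + q ^ (3 * ((n : ℤ) + 1) - 4 * (k + 1)) * cR q (n + 1) (k + 1) l - q ^ (5 * (n + 1) - 5 - 2 * k : ℤ) * cR q n k l := by
  unfold cR cQ
  simp only [zmerge q hq]
  push_cast
  rw [show ((n : ℤ) + 2 - (k + 1)) = (n - k) + 1 by ring, show ((n : ℤ) + 1 - (k + 1)) = n - k by ring,
    show ((n : ℤ) + 2 - (l + 1)) = n + 1 - l by ring, show ((n : ℤ) + 1 + 1 - (l + 1)) = n + 1 - l by ring,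
    show ((n : ℤ) + 1 + 1 - l) = n + 1 - l + 1 by ring, pascal q hq hn (-1) (by simp), pascal q hq hn 1 (by simp)]
  apply comb' q hq <;> push_cast <;> ring

theorem coefB1 (n l : ℕ) : cQ q (n + 2) 0 (l + 1) =
    q ^ ((n : ℤ) + 1 - 2 + 2 * (l + 1)) * cR q (n + 1) 0 (l + 1)
    + q ^ ((n : ℤ) + 1 + 2 * l) * cR q (n + 1) 0 l := by
  unfold cR cQ
  simp only [zmerge q hq, gb_zero, mul_one]
  push_cast
  rw [show ((n : ℤ) + 2 - 0) = (n + 1 - 0) + 1 by ring,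
    pascal q hq hn 1 (by simp)]
  apply comb1 q hq <;> ring

theorem coefB'1 (n l : ℕ) : cQ q (n + 2) 0 (l + 1) =
    q ^ ((n : ℤ) + 1 - 2) * cR q (n + 1) 0 (l + 1)
    + q ^ (3 * ((n : ℤ) + 1) - 4 * 0) * cR q (n + 1) 0 l := by
  unfold cR cQ
  simp only [zmerge q hq, gb_zero, mul_one]
  push_cast
  rw [show ((n : ℤ) + 2 - 0) = (n + 1 - 0) + 1 by ring,
    pascal q hq hn (-1) (by simp)]
  apply comb1 q hq <;> ring

omit hn in
theorem coefB0 (n k : ℕ) : cQ q (n + 2) k 0 =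
    q ^ ((n : ℤ) + 1 - 2) * cR q (n + 1) k 0 := by
  unfold cR cQ
  simp only [zmerge q hq, gb_zero]
  congr 2
  push_cast; ring

end coef

theorem cQ_van1 (q : K) (n l : ℕ) (h : l < n + 1) : cQ q n (n + 1) l = 0 := by
  unfold cQ; rw [gb_van q ((n : ℤ) - l) (n + 1) (by omega) (by push_cast; omega)]; simp

theorem cR_van1 (q : K) (n k : ℕ) (h : k < n + 2) : cR q n k (n + 1) = 0 := by
  unfold cR
  rcases Nat.lt_or_ge k (n + 1) with h' | h'
  · rw [gb_van q ((n : ℤ) - k) (n + 1) (by omega) (by push_cast; omega)]; simp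
  · obtain rfl : k = n + 1 := by omega
    rw [gb_van q ((n : ℤ) + 1 - (n + 1 : ℕ)) (n + 1) (by push_cast; omega) (by push_cast; omega)]; simp

section claims
variable {q : K} {u0 u1 u2 u3 p1 p0 : R} (h : QR2 q u0 u1 u2 u3 p1 p0) (hn : ∀ i : ℕ, gi q (i + 1) ≠ 0)
include h hn

theorem claimA (n : ℕ) : Rs q u1 u2 p1 p0 (n + 1) =
    q ^ (-(n : ℤ) - 1) • (u3 * Qs q u1 u2 p1 p0 (n + 1) * u1)
    - q ^ (5 * n + 3 : ℤ) • (p1 * (u2 * u2) * Qs q u1 u2 p1 p0 n * (u1 * u1)) := by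
  unfold Rs
  rw [sumG (n + 1) (n + 1) (cR q (n + 1)) (fun k l => q ^ ((n : ℤ) + 1 + 2 * k) * cQ q (n + 1) k l)
    (fun k l => q ^ ((n : ℤ) + 1 + 2 * k + 2) * cQ q (n + 1) k l) (fun k l => q ^ (5 * n + 3 : ℤ) * cQ q n k l)
    (fun k l => TT u1 u2 p1 p0 (n + 1 + 1 - k) k l (n + 1 - l))
    (fun l => coefA0 q h.hq n l) (fun k => by simpa using coefA1 q h.hq hn n k) (fun k l => by simpa using coefA2 q h.hq hn n k l)
    (fun l hl => by simp [cQ_van1 q (n + 1) l hl]) (fun l hl => by simp [cQ_van1 q n l hl])]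
  unfold Qs
  simp only [Finset.mul_sum, Finset.sum_mul, mul_smul_comm, smul_mul_assoc, h.t1, h.t2, Finset.smul_sum]
  congr 1
  · refine Finset.sum_congr rfl fun k hk => Finset.sum_congr rfl fun l hl => ?_
    simp only [Finset.mem_range] at hk hl
    rw [show n + 1 + 1 - k = n + 1 - k + 1 by omega, show n + 1 + 1 - (k + 1) = n + 1 - k by omega]
    simp only [smul_add, smul_smul]
    rw [mul_left_comm, ← zpow_add₀ h.hq, mul_left_comm, ← zpow_add₀ h.hq,
      mul_comm (cQ _ _ _ _), mul_comm (cQ _ _ _ _), Nat.cast_sub (by omega)]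
    push_cast; ring_nf
  · refine Finset.sum_congr rfl fun k hk => Finset.sum_congr rfl fun l hl => ?_
    simp only [Finset.mem_range] at hk hl
    rw [show n + 1 + 1 - (k + 1) = n - k + 1 by omega, show n + 1 - (l + 1) = n - l by omega, smul_smul]

theorem claimA' (n : ℕ) : Rs q u1 u2 p1 p0 (n + 1) =
    q ^ (5 * (n + 1) : ℤ) • (Qs q u1 u2 p1 p0 (n + 1) * p1) + q ^ (7 * (n + 1) + 2 : ℤ) • (Qs q u1 u2 p1 p0 (n + 1) * (u2 * u2))
    - q ^ (11 * n + 9 : ℤ) • (u2 * Qs q u1 u2 p1 p0 n * (u1 * u1) * (u2 * p1)) := by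
  unfold Rs
  rw [sumG (n + 1) (n + 1) (cR q (n + 1)) (fun k l => q ^ ((n : ℤ) + 1) * cQ q (n + 1) k l)
    (fun k l => q ^ (3 * ((n : ℤ) + 1) + 2 - 4 * l) * cQ q (n + 1) k l) (fun k l => q ^ (5 * n + 1 - 2 * l : ℤ) * cQ q n k l)
    (fun k l => TT u1 u2 p1 p0 (n + 1 + 1 - k) k l (n + 1 - l))
    (fun l => by simpa using coefA0 q h.hq n l) (fun k => by simpa using coefA'1 q h.hq hn n k) (fun k l => by simpa using coefA'2 q h.hq hn n k l)
    (fun l hl => by simp [cQ_van1 q (n + 1) l hl]) (fun l hl => by simp [cQ_van1 q n l hl])]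
  unfold Qs
  simp only [Finset.mul_sum, Finset.sum_mul, mul_smul_comm, smul_mul_assoc, h.t5, h.t6, h.t7, Finset.smul_sum, ← Finset.sum_add_distrib]
  congr 1
  · refine Finset.sum_congr rfl fun k hk => Finset.sum_congr rfl fun l hl => ?_
    simp only [Finset.mem_range] at hk hl
    rw [show n + 1 + 1 - k = n + 1 - k + 1 by omega, show n + 1 + 1 - (k + 1) = n + 1 - k by omega]
    simp only [smul_smul]
    rw [mul_left_comm, ← zpow_add₀ h.hq, mul_left_comm, ← zpow_add₀ h.hq,
      mul_comm (cQ _ _ _ _), mul_comm (cQ _ _ _ _), Nat.cast_sub (by omega)]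
    push_cast; ring_nf
  · refine Finset.sum_congr rfl fun k hk => Finset.sum_congr rfl fun l hl => ?_
    simp only [Finset.mem_range] at hk hl
    rw [show n + 1 + 1 - (k + 1) = n - k + 1 by omega, show n + 1 - (l + 1) = n - l by omega]
    simp only [smul_smul]
    rw [mul_left_comm, ← zpow_add₀ h.hq, mul_comm (cQ _ _ _ _), Nat.cast_sub (by omega)]
    ring_nf

theorem claimB (n : ℕ) : Qs q u1 u2 p1 p0 (n + 2) =
    q ^ (-(n : ℤ) - 3) • (u2 * Rs q u1 u2 p1 p0 (n + 1) * u0)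
    - q ^ (5 * (n + 1) - 1 : ℤ) • ((u2 * u2) * Rs q u1 u2 p1 p0 n * (u1 * u1 * p0)) := by
  unfold Qs
  rw [Finset.sum_comm]
  rw [sumG (n + 1) (n + 2) (fun l k => cQ q (n + 2) k l) (fun l k => q ^ ((n : ℤ) + 1 - 2 + 2 * l) * cR q (n + 1) k l)
    (fun l k => q ^ ((n : ℤ) + 1 + 2 * l) * cR q (n + 1) k l) (fun l k => q ^ (5 * (n + 1) - 1 : ℤ) * cR q n k l)
    (fun l k => TT u1 u2 p1 p0 (n + 2 - k) k l (n + 2 - l))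
    (fun k => by simpa using coefB0 q h.hq n k) (fun l => by simpa using coefB1 q h.hq hn n l) (fun l k => by simpa using coefB2 q h.hq hn n k l)
    (fun l hl => by simp [cR_van1 q (n + 1) l hl]) (fun l hl => by simp [cR_van1 q n l hl])]
  unfold Rs
  simp only [Finset.mul_sum, Finset.sum_mul, mul_smul_comm, smul_mul_assoc, h.t3, h.t4, Finset.smul_sum]
  rw [Finset.sum_comm, Finset.sum_comm (s := Finset.range (n + 1))]
  congr 1
  · refine Finset.sum_congr rfl fun k hk => Finset.sum_congr rfl fun l hl => ?_
    simp only [Finset.mem_range] at hk hl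
    rw [show n + 2 - l = n + 1 - l + 1 by omega, show n + 2 - (l + 1) = n + 1 - l by omega]
    simp only [smul_add, smul_smul]
    rw [mul_left_comm, ← zpow_add₀ h.hq, mul_left_comm, ← zpow_add₀ h.hq,
      mul_comm (cR _ _ _ _), mul_comm (cR _ _ _ _), Nat.cast_sub (by omega)]
    push_cast; ring_nf
  · refine Finset.sum_congr rfl fun k hk => Finset.sum_congr rfl fun l hl => ?_
    simp only [Finset.mem_range] at hk hl
    rw [show n + 2 - (k + 1) = n + 1 - k by omega, show n + 2 - (l + 1) = n - l + 1 by omega, smul_smul]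

theorem claimB' (n : ℕ) : Qs q u1 u2 p1 p0 (n + 2) =
    q ^ (5 * (n + 1) + 2 : ℤ) • (p0 * Rs q u1 u2 p1 p0 (n + 1)) + q ^ (7 * (n + 1) + 4 : ℤ) • (u1 * u1 * Rs q u1 u2 p1 p0 (n + 1))
    - q ^ (11 * (n + 1) + 3 : ℤ) • (p0 * u1 * (u2 * u2) * Rs q u1 u2 p1 p0 n * u1) := by
  unfold Qs
  rw [Finset.sum_comm]
  rw [sumG (n + 1) (n + 2) (fun l k => cQ q (n + 2) k l) (fun l k => q ^ ((n : ℤ) + 1 - 2) * cR q (n + 1) k l)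
    (fun l k => q ^ (3 * ((n : ℤ) + 1) - 4 * k) * cR q (n + 1) k l) (fun l k => q ^ (5 * (n + 1) - 5 - 2 * k : ℤ) * cR q n k l)
    (fun l k => TT u1 u2 p1 p0 (n + 2 - k) k l (n + 2 - l))
    (fun k => by simpa using coefB0 q h.hq n k) (fun l => by simpa using coefB'1 q h.hq hn n l) (fun l k => by simpa using coefB'2 q h.hq hn n k l)
    (fun l hl => by simp [cR_van1 q (n + 1) l hl]) (fun l hl => by simp [cR_van1 q n l hl])]
  unfold Rs
  simp only [Finset.mul_sum, Finset.sum_mul, mul_smul_comm, smul_mul_assoc, h.t8, h.t9, h.t10, Finset.smul_sum, ← Finset.sum_add_distrib]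
  rw [Finset.sum_comm, Finset.sum_comm (s := Finset.range (n + 1))]
  congr 1
  · refine Finset.sum_congr rfl fun k hk => Finset.sum_congr rfl fun l hl => ?_
    simp only [Finset.mem_range] at hk hl
    rw [show n + 2 - l = n + 1 - l + 1 by omega, show n + 2 - (l + 1) = n + 1 - l by omega]
    simp only [smul_smul]
    rw [mul_left_comm, ← zpow_add₀ h.hq, mul_left_comm, ← zpow_add₀ h.hq,
      mul_comm (cR _ _ _ _), mul_comm (cR _ _ _ _), Nat.cast_sub (by omega)]
    push_cast; ring_nf
  · refine Finset.sum_congr rfl fun k hk => Finset.sum_congr rfl fun l hl => ?_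
    simp only [Finset.mem_range] at hk hl
    rw [show n + 2 - (k + 1) = n + 1 - k by omega, show n + 2 - (l + 1) = n - l + 1 by omega]
    simp only [smul_smul]
    rw [mul_left_comm, ← zpow_add₀ h.hq, mul_comm (cR _ _ _ _), Nat.cast_sub (by omega)]
    push_cast; ring_nf

end claims

end Part5

section Part6
variable {K R : Type*} [Field K] [Ring R] [Algebra K R]

/-- The triple `(W n, X n, W (n+1))`. -/
def WX (q : K) (u0 u1 u2 u3 p1 p0 : R) : ℕ → R × R × R
  | 0 => (1, u3, u3 * u0 - q ^ (2 : ℤ) • (u2 * u1))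
  | n + 1 =>
    let t := WX q u0 u1 u2 u3 p1 p0 n
    let x := q ^ ((n : ℤ) + 1) • (u3 * t.2.2) - q ^ (5 * n + 3 : ℤ) • (p1 * u2 * t.1)
    (t.2.2, x, q ^ ((n : ℤ) + 1) • (x * u0) - q ^ (5 * n + 4 : ℤ) • (t.2.1 * u1 * p0))

section
variable {q : K} {u0 u1 u2 u3 p1 p0 : R} (h : QR2 q u0 u1 u2 u3 p1 p0) (hn : ∀ i : ℕ, gi q (i + 1) ≠ 0)
include h

theorem u2pow_u3 (n : ℕ) : QC q (-2 * n) (u2 ^ n) u3 := (h.c23.powL h.hq n).cast (by ring)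
theorem u2pow_p1 (n : ℕ) : u2 ^ n * p1 = p1 * u2 ^ n := by
  have := (h.p1u2.symm' h.hq).powL h.hq n
  simpa [QC] using this
theorem u0_u1pow (n : ℕ) : QC q (-2 * n) u0 (u1 ^ n) := (h.c01.powR h.hq n).cast (by ring)
theorem p0_u1pow (n : ℕ) : p0 * u1 ^ n = u1 ^ n * p0 := by
  have := (h.u1p0.symm' h.hq).powR h.hq n
  simpa [QC] using this

theorem stepX (n : ℕ) (w w1 : R) (e0 : u2 ^ n * w * u1 ^ n = Qs q u1 u2 p1 p0 n)
    (e1 : u2 ^ (n + 1) * w1 * u1 ^ (n + 1) = Qs q u1 u2 p1 p0 (n + 1)) (hn : ∀ i : ℕ, gi q (i + 1) ≠ 0) :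
    u2 ^ (n + 1) * (q ^ ((n : ℤ) + 1) • (u3 * w1) - q ^ (5 * n + 3 : ℤ) • (p1 * u2 * w)) * u1 ^ (n + 2) =
      Rs q u1 u2 p1 p0 (n + 1) := by
  rw [claimA h hn, ← e0, ← e1]
  rw [mul_sub, sub_mul, mul_smul_comm, mul_smul_comm, smul_mul_assoc, smul_mul_assoc]
  congr 1
  · rw [← mul_assoc, u2pow_u3 h, smul_mul_assoc, smul_mul_assoc, smul_smul, ← zpow_add₀ h.hq, pow_succ u1 (n + 1)]
    simp only [mul_assoc]
    push_cast; ring_nf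
  · rw [← mul_assoc, ← mul_assoc (u2 ^ (n + 1)), u2pow_p1 h, pow_succ u2, show n + 2 = n + 1 + 1 from rfl, pow_succ u1 (n + 1),
      pow_succ u1 n, ← pow_succ u2, pow_succ' u2]
    simp only [mul_assoc]
    rw [← mul_assoc (u2 ^ n) u2, ← pow_succ u2, pow_succ' u2, mul_assoc]

theorem stepW (n : ℕ) (x x1 : R) (e0 : u2 ^ n * x * u1 ^ (n + 1) = Rs q u1 u2 p1 p0 n)
    (e1 : u2 ^ (n + 1) * x1 * u1 ^ (n + 2) = Rs q u1 u2 p1 p0 (n + 1)) (hn : ∀ i : ℕ, gi q (i + 1) ≠ 0) :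
    u2 ^ (n + 2) * (q ^ ((n : ℤ) + 1) • (x1 * u0) - q ^ (5 * n + 4 : ℤ) • (x * u1 * p0)) * u1 ^ (n + 2) =
      Qs q u1 u2 p1 p0 (n + 2) := by
  rw [claimB h hn, ← e0, ← e1]
  rw [mul_sub, sub_mul, mul_smul_comm, mul_smul_comm, smul_mul_assoc, smul_mul_assoc]
  congr 1
  · rw [mul_assoc, mul_assoc, u0_u1pow h, mul_smul_comm, mul_smul_comm, smul_smul, ← zpow_add₀ h.hq, pow_succ' u2 (n + 1)]
    simp only [mul_assoc]
    push_cast; ring_nf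
  · simp only [mul_assoc]
    rw [p0_u1pow h, ← mul_assoc u1 (u1 ^ _), ← pow_succ', show n + 2 + 1 = n + 1 + 1 + 1 from rfl, show n + 2 = n + 1 + 1 from rfl,
      pow_succ u1 (n + 1 + 1), pow_succ u1 (n + 1), pow_succ' u2, pow_succ' u2]
    simp only [mul_assoc]
    ring_nf

theorem stepX' (n : ℕ) (w w1 : R) (e0 : u2 ^ n * w * u1 ^ n = Qs q u1 u2 p1 p0 n)
    (e1 : u2 ^ (n + 1) * w1 * u1 ^ (n + 1) = Qs q u1 u2 p1 p0 (n + 1)) (hn : ∀ i : ℕ, gi q (i + 1) ≠ 0) :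
    u2 ^ (n + 1) * (q ^ (3 * (n + 1) : ℤ) • (w1 * u3) - q ^ (7 * n + 1 : ℤ) • (w * (u2 * p1))) * u1 ^ (n + 2) =
      Rs q u1 u2 p1 p0 (n + 1) := by
  rw [claimA' h hn, ← e0, ← e1]
  have a1 : u3 * u1 ^ (n + 2) = q ^ (2 * (n + 1) : ℤ) • (u1 ^ (n + 1) * p1) + q ^ (4 * (n + 1) + 2 : ℤ) • (u1 ^ (n + 1) * (u2 * u2)) := by
    have b1 : QC q (2 * (n + 1 : ℤ)) p1 (u1 ^ (n + 1)) := ((h.u1p1.symm' h.hq).powR h.hq (n + 1)).cast (by push_cast; ring)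
    have b2 : QC q (4 * (n + 1 : ℤ)) (u2 * u2) (u1 ^ (n + 1)) :=
      (((h.c12.symm' h.hq).mulL h.hq (h.c12.symm' h.hq)).powR h.hq (n + 1)).cast (by push_cast; ring)
    rw [pow_succ', ← mul_assoc, h.e31, add_mul, b1, smul_mul_assoc, b2, smul_smul, ← zpow_add₀ h.hq]
    ring_nf
  have a2 : QC q (4 * n + 8) (u2 * p1) (u1 ^ (n + 2)) :=
    (((h.c12.symm' h.hq).mulL h.hq (h.u1p1.symm' h.hq)).powR h.hq (n + 2)).cast (by push_cast; ring)
  rw [mul_sub, sub_mul, mul_smul_comm, mul_smul_comm, smul_mul_assoc, smul_mul_assoc]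
  congr 1
  · simp only [mul_assoc, a1, mul_add, mul_smul_comm, smul_add, smul_smul]
    rw [← zpow_add₀ h.hq, ← zpow_add₀ h.hq]
    ring_nf
  · rw [mul_assoc, mul_assoc w, a2, mul_smul_comm, mul_smul_comm, smul_smul, ← zpow_add₀ h.hq, pow_succ' u2,
      show n + 2 = n + 1 + 1 from rfl, pow_succ u1 (n + 1), pow_succ u1 n]
    simp only [mul_assoc]
    ring_nf

theorem stepW' (n : ℕ) (x x1 : R) (e0 : u2 ^ n * x * u1 ^ (n + 1) = Rs q u1 u2 p1 p0 n)
    (e1 : u2 ^ (n + 1) * x1 * u1 ^ (n + 2) = Rs q u1 u2 p1 p0 (n + 1)) (hn : ∀ i : ℕ, gi q (i + 1) ≠ 0) :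
    u2 ^ (n + 2) * (q ^ (3 * (n + 1) + 2 : ℤ) • (u0 * x1) - q ^ (7 * (n + 1) - 1 : ℤ) • (p0 * u1 * x)) * u1 ^ (n + 2) =
      Qs q u1 u2 p1 p0 (n + 2) := by
  rw [claimB' h hn, ← e0, ← e1]
  have a1 : u2 ^ (n + 2) * u0 = q ^ (2 * (n + 1) : ℤ) • (p0 * u2 ^ (n + 1)) + q ^ (4 * (n + 1) + 2 : ℤ) • (u1 * u1 * u2 ^ (n + 1)) := by
    have b1 : QC q (2 * (n + 1 : ℤ)) (u2 ^ (n + 1)) p0 := ((h.p0u2.symm' h.hq).powL h.hq (n + 1)).cast (by push_cast; ring)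
    have b2 : QC q (4 * (n + 1 : ℤ)) (u2 ^ (n + 1)) (u1 * u1) :=
      (((h.c12.symm' h.hq).mulR h.hq (h.c12.symm' h.hq)).powL h.hq (n + 1)).cast (by push_cast; ring)
    rw [pow_succ, mul_assoc, h.e20, mul_add, b1, mul_smul_comm, b2, smul_smul, ← zpow_add₀ h.hq]
    ring_nf
  have a2 : QC q (4 * n + 8) (u2 ^ (n + 2)) (p0 * u1) :=
    (((h.p0u2.symm' h.hq).mulR h.hq (h.c12.symm' h.hq)).powL h.hq (n + 2)).cast (by push_cast; ring)
  rw [mul_sub, sub_mul, mul_smul_comm, mul_smul_comm, smul_mul_assoc, smul_mul_assoc]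
  congr 1
  · rw [← mul_assoc, a1]
    simp only [mul_assoc, add_mul, smul_mul_assoc, smul_add, smul_smul]
    rw [← zpow_add₀ h.hq, ← zpow_add₀ h.hq]
    ring_nf
  · rw [← mul_assoc, a2, smul_mul_assoc, smul_mul_assoc, smul_smul, ← zpow_add₀ h.hq, show n + 2 = n + 1 + 1 from rfl, pow_succ' u2,
      pow_succ' u2, pow_succ u1 (n + 1)]
    simp only [mul_assoc]
    ring_nf

omit h in
theorem Qs0 : Qs q u1 u2 p1 p0 0 = 1 := by
  simp [Qs, cQ, gb_zero, TT]

theorem Rs0 (hn : ∀ i : ℕ, gi q (i + 1) ≠ 0) : Rs q u1 u2 p1 p0 0 = u3 * u1 := by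
  have g1 : gi q 1 ≠ 0 := by simpa using hn 0
  rw [h.e31]
  simp [Rs, cR, gb_zero, TT, Finset.sum_range_succ, gb, g1, pow_two]

theorem Qs1 (hn : ∀ i : ℕ, gi q (i + 1) ≠ 0) : Qs q u1 u2 p1 p0 1 = u2 * (u3 * u0 - q ^ (2 : ℤ) • (u2 * u1)) * u1 := by
  have g1 : gi q 1 ≠ 0 := by simpa using hn 0
  have hq := h.hq
  have e1 : u2 * u3 * (u0 * u1) = q ^ (-2 : ℤ) • ((u3 * u1) * (u2 * u0)) := by
    rw [h.c23, h.c01, mul_smul_comm, smul_mul_assoc, smul_smul, ← mul_assoc, mul_assoc u3 u2, (h.c12.symm' hq), mul_smul_comm, smul_mul_assoc,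
      smul_smul, ← zpow_add₀ hq, ← zpow_add₀ hq, ← mul_assoc]
    norm_num [mul_assoc]
  rw [h.e31, h.e20] at e1
  have e2 : u2 * (u3 * u0 - q ^ (2 : ℤ) • (u2 * u1)) * u1 = u2 * u3 * (u0 * u1) - q ^ (2 : ℤ) • (u2 * u2 * (u1 * u1)) := by
    simp only [mul_sub, sub_mul, mul_smul_comm, smul_mul_assoc, mul_assoc]
  rw [e2, e1]
  simp [Qs, cQ, gb_zero, TT, Finset.sum_range_succ, gb, g1, pow_two]
  have z : gi q 0 = 0 := by simp [gi]
  simp only [z, zero_smul, add_zero, mul_add, add_mul, smul_add, smul_smul, mul_smul_comm, smul_mul_assoc]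
  match_scalars <;> field_simp <;> ring

theorem WX_torus (hn : ∀ i : ℕ, gi q (i + 1) ≠ 0) (n : ℕ) :
    u2 ^ n * (WX q u0 u1 u2 u3 p1 p0 n).1 * u1 ^ n = Qs q u1 u2 p1 p0 n ∧
    u2 ^ n * (WX q u0 u1 u2 u3 p1 p0 n).2.1 * u1 ^ (n + 1) = Rs q u1 u2 p1 p0 n ∧
    u2 ^ (n + 1) * (WX q u0 u1 u2 u3 p1 p0 n).2.2 * u1 ^ (n + 1) = Qs q u1 u2 p1 p0 (n + 1) := by
  induction n with
  | zero => simp [WX, Qs0, Rs0 h hn, Qs1 h hn]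
  | succ n ih =>
    obtain ⟨i1, i2, i3⟩ := ih
    have j := stepX h n _ _ i1 i3 hn
    exact ⟨i3, j, stepW h n _ _ i2 j hn⟩

theorem WX'_torus (hn : ∀ i : ℕ, gi q (i + 1) ≠ 0) (W X : ℕ → R) (w0 : W 0 = 1) (x0 : X 0 = u3)
    (w1 : W 1 = u3 * u0 - q ^ (2 : ℤ) • (u2 * u1))
    (hX : ∀ n : ℕ, X (n + 1) = q ^ (3 * (n + 1) : ℤ) • (W (n + 1) * u3) - q ^ (7 * n + 1 : ℤ) • (W n * (u2 * p1)))
    (hW : ∀ n : ℕ, W (n + 2) = q ^ (3 * (n + 1) + 2 : ℤ) • (u0 * X (n + 1)) - q ^ (7 * (n + 1) - 1 : ℤ) • (p0 * u1 * X n)) (n : ℕ) :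
    u2 ^ n * W n * u1 ^ n = Qs q u1 u2 p1 p0 n ∧
    u2 ^ n * X n * u1 ^ (n + 1) = Rs q u1 u2 p1 p0 n ∧
    u2 ^ (n + 1) * W (n + 1) * u1 ^ (n + 1) = Qs q u1 u2 p1 p0 (n + 1) := by
  induction n with
  | zero => simp [w0, x0, w1, Qs0, Rs0 h hn, Qs1 h hn]
  | succ n ih =>
    obtain ⟨i1, i2, i3⟩ := ih
    have j := stepX' h n _ _ i1 i3 hn
    rw [← hX] at j
    refine ⟨i3, j, ?_⟩
    have := stepW' h n _ _ i2 j hn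
    rwa [← hW] at this

end
end Part6

section Part7

theorem gi_qq_ne (i : ℕ) : gi qq ((i : ℤ) + 1) ≠ 0 := by
  have hq := qq_ne
  have h1 : qq - qq⁻¹ ≠ 0 := by
    intro h
    apply qq_pow_ne_one (m := 2) (by norm_num)
    field_simp at h
    linear_combination h
  unfold gi
  refine div_ne_zero ?_ h1
  intro h
  apply qq_pow_ne_one (m := 2 * (i + 1)) (by omega)
  rw [zpow_neg, sub_eq_zero, ← mul_eq_one_iff_eq_inv₀ (zpow_ne_zero _ hq)] at h
  rw [two_mul, pow_add]
  exact_mod_cast h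

theorem qr2 : QR2 qq us0 us1 us2 us3 ps1 ps0 := qrel_S.toQR2 qq_ne

/-- measure -/
def mu (b : Idx) : ℕ := b.1 + b.2.2.2

theorem tri_mu {a b : Idx} (h : b ∈ Sset a) : mu b < mu a := by
  obtain ⟨⟨s, r, h1, h2, h3, h4⟩, hne⟩ := h
  have : s + r ≠ 0 := by
    intro h0
    apply hne
    obtain ⟨a1, a2, a3, a4⟩ := a
    obtain ⟨b1, b2, b3, b4⟩ := b
    simp only at h1 h2 h3 h4
    simp only [Prod.mk.injEq]
    omega
  unfold mu
  omega

theorem tri_N {a b : Idx} (h : tri a b) : Nnum b = Nnum a := by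
  obtain ⟨s, r, h1, h2, h3, h4⟩ := h
  unfold Nnum
  rw [h1, h2, h3, h4]
  ring

theorem tri_trans {a b c : Idx} (h : tri a b) (h' : tri b c) : tri a c := by
  obtain ⟨s, r, h1, h2, h3, h4⟩ := h
  obtain ⟨s', r', k1, k2, k3, k4⟩ := h'
  refine ⟨s + s', r + r', ?_, ?_, ?_, ?_⟩ <;> push_cast <;> omega

theorem Sset_trans {a b c : Idx} (h : b ∈ Sset a) (h' : c ∈ Sset b) : c ∈ Sset a := by
  refine ⟨tri_trans h.1 h'.1, ?_⟩
  rintro rfl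
  exact absurd (tri_mu h) (not_lt.mpr (tri_mu h').le)

theorem mem_qZ_bar {bar : F →+* F} (hb : bar qq = qq⁻¹) (p : Polynomial ℤ)
    (h : bar (qq * Polynomial.eval₂ (Int.castRingHom F) qq p) = qq * Polynomial.eval₂ (Int.castRingHom F) qq p) :
    p = 0 := by
  by_contra hp
  have hq := qq_ne
  have hinj : Function.Injective (Polynomial.eval₂RingHom (Int.castRingHom F) qq) := by
    rw [injective_iff_map_eq_zero]
    intro r hr
    by_contra hr0
    have h1 : r.map (Int.castRingHom ℚ) ≠ 0 := (Polynomial.map_ne_zero_iff Int.cast_injective).mpr hr0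
    apply aeval_qq_ne h1
    rw [Polynomial.aeval_def, Polynomial.eval₂_map]
    rw [← hr, Polynomial.coe_eval₂RingHom]
    congr 1
    exact RingHom.ext_int _ _
  rw [map_mul, Polynomial.hom_eval₂, hb, show bar.comp (Int.castRingHom F) = Int.castRingHom F from RingHom.ext_int _ _] at h
  have : Invertible qq⁻¹ := invertibleOfNonzero (inv_ne_zero hq)
  have h2 := Polynomial.eval₂_reverse_mul_pow (Int.castRingHom F) qq⁻¹ p
  rw [invOf_eq_inv, inv_inv, inv_pow] at h2
  rw [← h2] at h
  have h3 : Polynomial.eval₂ (Int.castRingHom F) qq p.reverse =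
      Polynomial.eval₂ (Int.castRingHom F) qq (Polynomial.X ^ (p.natDegree + 2) * p) := by
    rw [Polynomial.eval₂_mul, Polynomial.eval₂_X_pow, pow_add]
    field_simp at h
    linear_combination h
  have h4 : p.reverse = Polynomial.X ^ (p.natDegree + 2) * p := hinj h3
  have h5 := Polynomial.reverse_natDegree_le p
  rw [h4, Polynomial.natDegree_mul (pow_ne_zero _ Polynomial.X_ne_zero) hp, Polynomial.natDegree_X_pow] at h5
  omega

section Gen
variable {K R : Type*} [Field K] [Ring R] [Algebra K R]

/-- generic monomial -/
def gm (u0 u1 u2 u3 : R) (a : Idx) : R := u3 ^ a.1 * u2 ^ a.2.1 * u1 ^ a.2.2.1 * u0 ^ a.2.2.2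

/-- generic dual PBW element -/
def gE (q : K) (u0 u1 u2 u3 : R) (a : Idx) : R := q ^ bexp a • gm u0 u1 u2 u3 a

/-- All hypotheses bundled. -/
structure DSet (q : K) (bar : K →+* K) (σ : R → R) (B : Idx → R) (u0 u1 u2 u3 p1 p0 : R) : Prop where
  qr : QR2 q u0 u1 u2 u3 p1 p0
  hn : ∀ i : ℕ, gi q (i + 1) ≠ 0
  hZ : ∀ p : Polynomial ℤ, bar (q * Polynomial.eval₂ (Int.castRingHom K) q p) =
    q * Polynomial.eval₂ (Int.castRingHom K) q p → p = 0
  li : LinearIndependent K (gm u0 u1 u2 u3)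
  bq : bar q = q⁻¹
  surj : Function.Surjective σ
  sadd : ∀ x y, σ (x + y) = σ x + σ y
  smul' : ∀ x y, σ (x * y) = σ y * σ x
  ssm : ∀ (c : K) x, σ (c • x) = bar c • σ x
  s0 : σ u0 = u0
  s1 : σ u1 = q ^ 2 • u1
  s2 : σ u2 = q ^ 4 • u2
  s3 : σ u3 = q ^ 6 • u3
  c1 : ∀ a, ∃ φ : Idx →₀ Polynomial ℤ, (↑φ.support : Set Idx) ⊆ Sset a ∧
    B a - gE q u0 u1 u2 u3 a =
      φ.sum fun b p => (q * Polynomial.eval₂ (Int.castRingHom K) q p) • gE q u0 u1 u2 u3 b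
  c2 : ∀ a, σ (B a) = q ^ (-Nnum a) • B a

variable (K) in
/-- span of lower terms -/
def DD (E : Idx → R) (a : Idx) : Submodule K R := Submodule.span K (E '' Sset a)

theorem DD_mono {E : Idx → R} {a b : Idx} (h : b ∈ Sset a) : DD K E b ≤ DD K E a :=
  Submodule.span_mono (Set.image_mono fun _ hc => Sset_trans h hc)

theorem E_DD {E : Idx → R} {a b : Idx} (h : b ∈ Sset a) : E b ∈ DD K E a := Submodule.subset_span ⟨b, h, rfl⟩

/-- The additive group `qℤ[q]`. -/
def JG (q : K) : AddSubgroup K :=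
  ((Polynomial.eval₂RingHom (Int.castRingHom K) q).toAddMonoidHom.range).map (AddMonoidHom.mulLeft q)

theorem mem_JG {q c : K} : c ∈ JG q ↔ ∃ p : Polynomial ℤ, c = q * Polynomial.eval₂ (Int.castRingHom K) q p := by
  constructor
  · rintro ⟨_, ⟨p, rfl⟩, rfl⟩; exact ⟨p, rfl⟩
  · rintro ⟨p, rfl⟩; exact ⟨_, ⟨p, rfl⟩, rfl⟩

theorem coords {E : Idx → R} (hE : LinearIndependent K E) : ∃ g : R →ₗ[K] (Idx →₀ K), ∀ b, g (E b) = Finsupp.single b 1 := by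
  obtain ⟨g, hg⟩ := LinearMap.exists_leftInverse_of_injective (Finsupp.linearCombination K E)
    (LinearMap.ker_eq_bot.mpr hE)
  refine ⟨g, fun b => ?_⟩
  have := LinearMap.congr_fun hg (Finsupp.single b 1)
  simpa using this

theorem DD_coord {E : Idx → R} {g : R →ₗ[K] (Idx →₀ K)} (hg : ∀ b, g (E b) = Finsupp.single b 1) {a b : Idx} {y : R}
    (hy : y ∈ DD K E a) (hb : b ∉ Sset a) : g y b = 0 := by
  unfold DD at hy
  induction hy using Submodule.span_induction with
  | mem x hx =>
    obtain ⟨c, hc, rfl⟩ := hx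
    rw [hg, Finsupp.single_apply, if_neg]
    rintro rfl; exact hb hc
  | zero => simp
  | add x y _ _ hx hy => simp [hx, hy]
  | smul c x _ hx => simp [hx]

namespace DSet
variable {q : K} {bar : K →+* K} {σ : R → R} {B : Idx → R} {u0 u1 u2 u3 p1 p0 : R}
  (h : DSet q bar σ B u0 u1 u2 u3 p1 p0)
include h

theorem cDD (a : Idx) : B a - gE q u0 u1 u2 u3 a ∈ DD K (gE q u0 u1 u2 u3) a := by
  obtain ⟨φ, hs, he⟩ := h.c1 a
  rw [he]
  exact Submodule.sum_mem _ fun b hb => Submodule.smul_mem _ _ (E_DD (hs hb))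

theorem sz : σ 0 = 0 := by
  have := h.sadd 0 0
  simpa using this

theorem sneg (x : R) : σ (-x) = - σ x := by
  have := h.sadd x (-x)
  rw [add_neg_cancel, h.sz] at this
  exact (neg_eq_of_add_eq_zero_right this.symm).symm

theorem ssub (x y : R) : σ (x - y) = σ x - σ y := by
  rw [sub_eq_add_neg, h.sadd, h.sneg, sub_eq_add_neg]

theorem barz (m : ℤ) : bar (q ^ m) = q ^ (-m) := by
  rw [map_zpow₀, h.bq, inv_zpow, zpow_neg]

theorem sspan {s : Set R} {P : Submodule K R} (hs : ∀ x ∈ s, σ x ∈ P) {y : R} (hy : y ∈ Submodule.span K s) : σ y ∈ P := by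
  induction hy using Submodule.span_induction with
  | mem x hx => exact hs x hx
  | zero => rw [h.sz]; exact P.zero_mem
  | add x y _ _ hx hy => rw [h.sadd]; exact P.add_mem hx hy
  | smul c x _ hx => rw [h.ssm]; exact P.smul_mem _ hx

theorem stri (a : Idx) : σ (gE q u0 u1 u2 u3 a) - q ^ (-Nnum a) • gE q u0 u1 u2 u3 a ∈ DD K (gE q u0 u1 u2 u3) a := by
  induction hm : mu a using Nat.strong_induction_on generalizing a with
  | _ m ih =>
    have hY := h.cDD a
    have hsY : σ (B a - gE q u0 u1 u2 u3 a) ∈ DD K (gE q u0 u1 u2 u3) a := by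
      refine h.sspan ?_ hY
      rintro _ ⟨b, hb, rfl⟩
      have := ih (mu b) (hm ▸ tri_mu hb) b rfl
      have h2 := (DD K (gE q u0 u1 u2 u3) a).add_mem (DD_mono hb this)
        ((DD K (gE q u0 u1 u2 u3) a).smul_mem (q ^ (-Nnum b)) (E_DD hb))
      simpa using h2
    have h3 := (DD K (gE q u0 u1 u2 u3) a).sub_mem ((DD K (gE q u0 u1 u2 u3) a).smul_mem (q ^ (-Nnum a)) hY) hsY
    rw [h.ssub, h.c2 a] at h3
    convert h3 using 1
    rw [smul_sub]; abel

theorem Eli : LinearIndependent K (gE q u0 u1 u2 u3) := by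
  have := h.li.units_smul (fun a => (Units.mk0 q h.qr.hq) ^ bexp a)
  convert this using 1
  funext a
  simp [gE, Units.smul_def]

theorem uniq {g : R →ₗ[K] (Idx →₀ K)} (hg : ∀ b, g (gE q u0 u1 u2 u3 b) = Finsupp.single b 1)
    (a : Idx) (Y : R) (hY : Y ∈ DD K (gE q u0 u1 u2 u3) a) (hJ : ∀ b, g Y b ∈ JG q)
    (hs : σ Y = q ^ (-Nnum a) • Y) : Y = 0 := by
  obtain ⟨c, hc, hcY⟩ := (Finsupp.mem_span_image_iff_linearCombination K).mp hY
  have hgY : g Y = c := by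
    rw [← hcY, Finsupp.linearCombination_apply, map_finsuppSum]
    simp only [_root_.map_smul, hg, Finsupp.smul_single, smul_eq_mul, mul_one]
    exact Finsupp.sum_single c
  by_contra hY0
  have hc0 : c ≠ 0 := by
    rintro rfl; apply hY0; rw [← hcY]; simp
  obtain ⟨b, hb, hmax⟩ := Finset.exists_max_image c.support mu (Finsupp.support_nonempty_iff.mpr hc0)
  have hcS : ∀ b' ∈ c.support, b' ∈ Sset a := fun b' hb' => hc hb'
  have e1 : ∀ s : Finset Idx, s ⊆ c.support → g (σ (∑ b' ∈ s, c b' • (gE q u0 u1 u2 u3 b'))) b =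
      ∑ b' ∈ s, bar (c b') * (q ^ (-Nnum b') * (Finsupp.single b' (1 : K) b)) := by
    intro s
    induction s using Finset.induction_on with
    | empty => intro _; simp [h.sz]
    | insert b' s hb's ih =>
      intro hsub
      rw [Finset.sum_insert hb's, Finset.sum_insert hb's, h.sadd, map_add, Finsupp.add_apply,
        ih (fun x hx => hsub (Finset.mem_insert_of_mem hx)), h.ssm]
      congr 1
      have h1 := h.stri b'
      have h2 : b ∉ Sset b' := fun h0 => absurd (tri_mu h0) (not_lt.mpr (hmax b' (hsub (Finset.mem_insert_self _ _))))
      have h3 := DD_coord hg h1 h2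
      rw [_root_.map_sub, _root_.map_smul, hg, Finsupp.sub_apply, Finsupp.smul_apply, sub_eq_zero] at h3
      rw [map_smul, Finsupp.smul_apply, h3, smul_eq_mul, smul_eq_mul]
  have e2 := e1 c.support subset_rfl
  rw [show ∑ b' ∈ c.support, c b' • (gE q u0 u1 u2 u3 b') = Y from hcY, hs, map_smul, hgY, Finset.sum_eq_single b] at e2
  · rw [Finsupp.smul_apply, smul_eq_mul, Finsupp.single_eq_same, mul_one, tri_N (hcS b hb).1, mul_comm] at e2
    have e3 := mul_right_cancel₀ (zpow_ne_zero _ h.qr.hq) e2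
    obtain ⟨p, hp⟩ := mem_JG.mp (hJ b)
    rw [hgY] at hp
    rw [hp] at e3
    have := h.hZ p e3.symm
    rw [this] at hp
    simp at hp
    exact (Finsupp.mem_support_iff.mp hb) hp
  · intro b' _ hne
    rw [Finsupp.single_apply, if_neg hne]; simp
  · intro h0; exact absurd hb h0

end DSet
end Gen
end Part7

section Part8
variable {K R : Type*} [Field K] [Ring R] [Algebra K R]

theorem bexp_z (a3 a2 a1 a0 : ℕ) : 2 * (bexp (a3, a2, a1, a0) : ℤ) =
    a3 * (a3 - 1) + a2 * (a2 - 1) + a1 * (a1 - 1) + a0 * (a0 - 1) := by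
  have key : ∀ m : ℕ, 2 * (Nat.choose m 2 : ℤ) = m * (m - 1) := by
    intro m
    induction m with
    | zero => simp
    | succ m ih =>
      rw [Nat.choose_succ_succ' m 1]
      push_cast
      rw [mul_add, ih, Nat.choose_one_right]; ring
  simp only [bexp]
  push_cast
  linear_combination key a3 + key a2 + key a1 + key a0

theorem gE_z (q : K) (u0 u1 u2 u3 : R) (a : Idx) :
    gE q u0 u1 u2 u3 a = q ^ (bexp a : ℤ) • gm u0 u1 u2 u3 a := by
  rw [gE, zpow_natCast]

theorem gm_gE {q : K} (hq : q ≠ 0) (u0 u1 u2 u3 : R) (a : Idx) (m z : ℤ) (h : z = m - bexp a) :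
    q ^ m • gm u0 u1 u2 u3 a = q ^ z • gE q u0 u1 u2 u3 a := by
  rw [gE_z, smul_smul, ← zpow_add₀ hq, h]; congr 2; ring

section
variable {q : K} {u0 u1 u2 u3 p1 p0 : R} (h : QR2 q u0 u1 u2 u3 p1 p0)
include h

theorem u3_gE (a3 a2 a1 a0 : ℕ) : u3 * gE q u0 u1 u2 u3 (a3, a2, a1, a0) =
    q ^ (-(a3 : ℤ)) • gE q u0 u1 u2 u3 (a3 + 1, a2, a1, a0) := by
  rw [gE_z q u0 u1 u2 u3 (a3, a2, a1, a0), mul_smul_comm,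
    show u3 * gm u0 u1 u2 u3 (a3, a2, a1, a0) = gm u0 u1 u2 u3 (a3 + 1, a2, a1, a0) by
      simp only [gm, pow_succ' u3, mul_assoc]]
  apply gm_gE h.hq
  have e1 := bexp_z a3 a2 a1 a0
  have e2 := bexp_z (a3 + 1) a2 a1 a0
  push_cast at e2
  linarith

theorem gE_u0 (a3 a2 a1 a0 : ℕ) : gE q u0 u1 u2 u3 (a3, a2, a1, a0) * u0 =
    q ^ (-(a0 : ℤ)) • gE q u0 u1 u2 u3 (a3, a2, a1, a0 + 1) := by
  rw [gE_z q u0 u1 u2 u3 (a3, a2, a1, a0), smul_mul_assoc,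
    show gm u0 u1 u2 u3 (a3, a2, a1, a0) * u0 = gm u0 u1 u2 u3 (a3, a2, a1, a0 + 1) by
      simp only [gm, pow_succ u0, mul_assoc]]
  apply gm_gE h.hq
  have e1 := bexp_z a3 a2 a1 a0
  have e2 := bexp_z a3 a2 a1 (a0 + 1)
  push_cast at e2
  linarith

theorem u2pow_gm_u1pow (n m : ℕ) (a3 a2 a1 a0 : ℕ) : u2 ^ n * gm u0 u1 u2 u3 (a3, a2, a1, a0) * u1 ^ m =
    q ^ (-2 * n * a3 - 2 * m * a0 : ℤ) • gm u0 u1 u2 u3 (a3, a2 + n, a1 + m, a0) := by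
  have e1 : QC q (-2 * n * a3) (u2 ^ n) (u3 ^ a3) := ((h.c23.powL h.hq n).powR h.hq a3).cast (by ring)
  have e2 : QC q (-2 * m * a0) (u0 ^ a0) (u1 ^ m) := ((h.c01.powL h.hq a0).powR h.hq m).cast (by ring)
  simp only [gm, mul_assoc]
  rw [e2, e1.asc, add_comm a2 n, pow_add, pow_add]
  simp only [mul_smul_comm, smul_smul, mul_assoc]
  rw [← zpow_add₀ h.hq]
  congr 2

theorem u2_gE (a3 a2 a1 a0 : ℕ) : u2 * gE q u0 u1 u2 u3 (a3, a2, a1, a0) =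
    q ^ (-2 * a3 - a2 : ℤ) • gE q u0 u1 u2 u3 (a3, a2 + 1, a1, a0) := by
  have := u2pow_gm_u1pow h 1 0 a3 a2 a1 a0
  rw [pow_one, pow_zero, mul_one, add_zero] at this
  rw [gE_z q u0 u1 u2 u3 (a3, a2, a1, a0), mul_smul_comm, this, smul_smul, ← zpow_add₀ h.hq]
  apply gm_gE h.hq
  have e1 := bexp_z a3 a2 a1 a0
  have e2 := bexp_z a3 (a2 + 1) a1 a0
  push_cast at e2 ⊢
  linarith

theorem gE_u1 (a3 a2 a1 a0 : ℕ) : gE q u0 u1 u2 u3 (a3, a2, a1, a0) * u1 =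
    q ^ (-2 * a0 - a1 : ℤ) • gE q u0 u1 u2 u3 (a3, a2, a1 + 1, a0) := by
  have := u2pow_gm_u1pow h 0 1 a3 a2 a1 a0
  rw [pow_one, pow_zero, one_mul, add_zero] at this
  rw [gE_z q u0 u1 u2 u3 (a3, a2, a1, a0), smul_mul_assoc, this, smul_smul, ← zpow_add₀ h.hq]
  apply gm_gE h.hq
  have e1 := bexp_z a3 a2 a1 a0
  have e2 := bexp_z a3 a2 (a1 + 1) a0
  push_cast at e2 ⊢
  linarith

theorem p1_gm (a3 a2 a1 a0 : ℕ) : p1 * gm u0 u1 u2 u3 (a3, a2, a1, a0) =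
    q ^ (-2 * a3 - 2 * a2 : ℤ) • gm u0 u1 u2 u3 (a3 + 1, a2, a1 + 1, a0) -
    q ^ (-2 * a3 + 2 : ℤ) • gm u0 u1 u2 u3 (a3, a2 + 2, a1, a0) := by
  have e1 : QC q (-2 * a3) p1 (u3 ^ a3) := (h.p1u3.powR h.hq a3).cast (by ring)
  have e2 : QC q (-2 * a2) u1 (u2 ^ a2) := (h.c12.powR h.hq a2).cast (by ring)
  have e3 : p1 = u3 * u1 - q ^ (2 : ℤ) • (u2 * u2) := by rw [h.e31]; simp
  simp only [gm, mul_assoc]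
  rw [e1.asc]
  conv_lhs => rw [e3]
  rw [sub_mul, mul_assoc, e2.asc, pow_succ u3, pow_succ' u1, add_comm a2 2, pow_add, pow_two]
  simp only [mul_smul_comm, smul_mul_assoc, smul_smul, mul_assoc, mul_sub, smul_sub]
  rw [← zpow_add₀ h.hq, ← zpow_add₀ h.hq]
  congr 3

theorem p1_gE (a3 a2 a1 a0 : ℕ) : p1 * gE q u0 u1 u2 u3 (a3, a2, a1, a0) =
    q ^ (-3 * a3 - 2 * a2 - a1 : ℤ) • gE q u0 u1 u2 u3 (a3 + 1, a2, a1 + 1, a0) -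
    q ^ (-2 * a3 - 2 * a2 + 1 : ℤ) • gE q u0 u1 u2 u3 (a3, a2 + 2, a1, a0) := by
  rw [gE_z q u0 u1 u2 u3 (a3, a2, a1, a0), mul_smul_comm, p1_gm h, smul_sub, smul_smul, smul_smul,
    ← zpow_add₀ h.hq, ← zpow_add₀ h.hq]
  have e1 := bexp_z a3 a2 a1 a0
  congr 1 <;> apply gm_gE h.hq
  · have e2 := bexp_z (a3 + 1) a2 (a1 + 1) a0
    push_cast at e2 ⊢
    linarith
  · have e2 := bexp_z a3 (a2 + 2) a1 a0
    push_cast at e2 ⊢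
    linarith

theorem gm_p0 (a3 a2 a1 a0 : ℕ) : gm u0 u1 u2 u3 (a3, a2, a1, a0) * p0 =
    q ^ (-2 * a0 - 2 * a1 : ℤ) • gm u0 u1 u2 u3 (a3, a2 + 1, a1, a0 + 1) -
    q ^ (-2 * a0 + 2 : ℤ) • gm u0 u1 u2 u3 (a3, a2, a1 + 2, a0) := by
  have e1 : QC q (-2 * a0) (u0 ^ a0) p0 := (h.u0p0.powL h.hq a0).cast (by ring)
  have e2 : QC q (-2 * a1) (u1 ^ a1) u2 := (h.c12.powL h.hq a1).cast (by ring)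
  have e3 : p0 = u2 * u0 - q ^ (2 : ℤ) • (u1 * u1) := by rw [h.e20]; simp
  simp only [gm, mul_assoc]
  rw [e1]
  conv_lhs => rw [e3]
  rw [sub_mul, mul_assoc u2]
  simp only [mul_smul_comm, smul_mul_assoc, smul_smul, mul_assoc, mul_sub, smul_sub]
  rw [e2.asc, pow_succ u2, pow_succ' u0, pow_add u1 a1 2, pow_two]
  simp only [mul_smul_comm, smul_mul_assoc, smul_smul, mul_assoc, mul_sub, smul_sub]
  rw [← zpow_add₀ h.hq, ← zpow_add₀ h.hq]
  congr 3

theorem gE_p0 (a3 a2 a1 a0 : ℕ) : gE q u0 u1 u2 u3 (a3, a2, a1, a0) * p0 =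
    q ^ (-3 * a0 - 2 * a1 - a2 : ℤ) • gE q u0 u1 u2 u3 (a3, a2 + 1, a1, a0 + 1) -
    q ^ (-2 * a0 - 2 * a1 + 1 : ℤ) • gE q u0 u1 u2 u3 (a3, a2, a1 + 2, a0) := by
  rw [gE_z q u0 u1 u2 u3 (a3, a2, a1, a0), smul_mul_assoc, gm_p0 h, smul_sub, smul_smul, smul_smul,
    ← zpow_add₀ h.hq, ← zpow_add₀ h.hq]
  have e1 := bexp_z a3 a2 a1 a0
  congr 1 <;> apply gm_gE h.hq
  · have e2 := bexp_z a3 (a2 + 1) a1 (a0 + 1)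
    push_cast at e2 ⊢
    linarith
  · have e2 := bexp_z a3 a2 (a1 + 2) a0
    push_cast at e2 ⊢
    linarith

/-- Injectivity of `x ↦ u₂ⁿ x u₁ᵐ` on the span of monomials. -/
theorem cancel_uu (li : LinearIndependent K (gm u0 u1 u2 u3)) (n m : ℕ) {x y : R}
    (hx : x ∈ Submodule.span K (Set.range (gm u0 u1 u2 u3)))
    (hy : y ∈ Submodule.span K (Set.range (gm u0 u1 u2 u3)))
    (e : u2 ^ n * x * u1 ^ m = u2 ^ n * y * u1 ^ m) : x = y := by
  let f : R →ₗ[K] R := (LinearMap.mulRight K (u1 ^ m)).comp (LinearMap.mulLeft K (u2 ^ n))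
  let sh : Idx → Idx := fun a => (a.1, a.2.1 + n, a.2.2.1 + m, a.2.2.2)
  have hsh : Function.Injective sh := by
    rintro ⟨a3, a2, a1, a0⟩ ⟨b3, b2, b1, b0⟩ hab
    simp only [sh, Prod.mk.injEq] at hab
    simp only [Prod.mk.injEq]
    omega
  have l1 := (li.comp sh hsh).units_smul
    (fun a => (Units.mk0 q h.hq) ^ (-2 * n * a.1 - 2 * m * a.2.2.2 : ℤ))
  have l2 : LinearIndependent K (f ∘ gm u0 u1 u2 u3) := by
    convert l1 using 1
    funext ⟨a3, a2, a1, a0⟩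
    have := u2pow_gm_u1pow h n m a3 a2 a1 a0
    simp [f, sh, Units.smul_def, this]
  obtain ⟨c, rfl⟩ := (Finsupp.mem_span_range_iff_exists_finsupp).mp hx
  obtain ⟨d, rfl⟩ := (Finsupp.mem_span_range_iff_exists_finsupp).mp hy
  have e' : f (c.sum fun i a => a • gm u0 u1 u2 u3 i) = f (d.sum fun i a => a • gm u0 u1 u2 u3 i) := e
  have hf : ∀ c : Idx →₀ K, f (c.sum fun i a => a • gm u0 u1 u2 u3 i) =
      Finsupp.linearCombination K (f ∘ gm u0 u1 u2 u3) c := by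
    intro c
    rw [map_finsuppSum, Finsupp.linearCombination_apply]
    simp only [_root_.map_smul, Function.comp]
  rw [hf, hf] at e'
  rw [l2 e']

end
end Part8

section Part9
variable {K R : Type*} [Field K] [Ring R] [Algebra K R]

/-- The lattice spanned by `q^z E[b]`, `z ≥ z₀`, `b ∈ P`. -/
def CL (q : K) (E : Idx → R) (z0 : ℤ) (P : Set Idx) : AddSubgroup R :=
  AddSubgroup.closure {x | ∃ z : ℤ, z0 ≤ z ∧ ∃ b ∈ P, x = q ^ z • E b}

theorem CL_mem {q : K} {E : Idx → R} {z0 : ℤ} {P : Set Idx} (z : ℤ) (hz : z0 ≤ z) (b : Idx) (hb : b ∈ P) :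
    q ^ z • E b ∈ CL q E z0 P := AddSubgroup.subset_closure ⟨z, hz, b, hb, rfl⟩

theorem CL_map {q : K} {E : Idx → R} {z0 : ℤ} {P : Set Idx} (f : R →ₗ[K] R) (G : AddSubgroup R)
    (hf : ∀ z : ℤ, z0 ≤ z → ∀ a3 a2 a1 a0 : ℕ, (a3, a2, a1, a0) ∈ P → q ^ z • f (E (a3, a2, a1, a0)) ∈ G) {x : R}
    (hx : x ∈ CL q E z0 P) : f x ∈ G := by
  unfold CL at hx
  induction hx using AddSubgroup.closure_induction with
  | mem x hx =>
    obtain ⟨z, hz, ⟨a3, a2, a1, a0⟩, hb, rfl⟩ := hx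
    rw [_root_.map_smul]; exact hf z hz a3 a2 a1 a0 hb
  | zero => rw [map_zero]; exact G.zero_mem
  | add x y _ _ hx hy => rw [map_add]; exact G.add_mem hx hy
  | neg x _ hx => rw [map_neg]; exact G.neg_mem hx

theorem Sset_mk {a b : Idx} (s r : ℕ) (h0 : 0 < s + r) (h1 : (b.1 : ℤ) = a.1 - s)
    (h2 : (b.2.1 : ℤ) = a.2.1 + 2 * s - r) (h3 : (b.2.2.1 : ℤ) = a.2.2.1 - s + 2 * r)
    (h4 : (b.2.2.2 : ℤ) = a.2.2.2 - r) : b ∈ Sset a := by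
  refine ⟨⟨s, r, h1, h2, h3, h4⟩, ?_⟩
  rintro rfl
  omega

theorem tri_refl (a : Idx) : tri a a := ⟨0, 0, by simp, by simp, by simp, by simp⟩

theorem CL_tri {q : K} {E : Idx → R} {a : Idx} {x : R} (hx : x - E a ∈ CL q E 1 (Sset a)) :
    x ∈ CL q E 0 {b | tri a b} := by
  have h1 : CL q E 1 (Sset a) ≤ CL q E 0 {b | tri a b} := by
    apply AddSubgroup.closure_mono
    rintro _ ⟨z, hz, b, hb, rfl⟩
    exact ⟨z, by omega, b, hb.1, rfl⟩
  have h2 := (CL q E 0 {b | tri a b}).add_mem (h1 hx) (CL_mem (q := q) (E := E) 0 le_rfl a (tri_refl a))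
  simpa using h2

theorem sub_lem {G : AddSubgroup R} {x e y f : R} (hx : x - e ∈ G) (hy : y ∈ G) (hf : f = e) : (x - y) - f ∈ G := by
  rw [hf, sub_right_comm]; exact G.sub_mem hx hy

section
variable {q : K} {u0 u1 u2 u3 p1 p0 : R} (h : QR2 q u0 u1 u2 u3 p1 p0)
include h

theorem lat_X (n : ℕ) {w w1 : R}
    (hw1 : w1 - gE q u0 u1 u2 u3 (n + 1, 0, 0, n + 1) ∈ CL q (gE q u0 u1 u2 u3) 1 (Sset (n + 1, 0, 0, n + 1)))
    (hw : w - gE q u0 u1 u2 u3 (n, 0, 0, n) ∈ CL q (gE q u0 u1 u2 u3) 1 (Sset (n, 0, 0, n))) :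
    q ^ ((n : ℤ) + 1) • (u3 * w1) - q ^ (5 * n + 3 : ℤ) • (p1 * u2 * w) -
      gE q u0 u1 u2 u3 (n + 2, 0, 0, n + 1) ∈ CL q (gE q u0 u1 u2 u3) 1 (Sset (n + 2, 0, 0, n + 1)) := by
  have hq := h.hq
  apply sub_lem (e := q ^ ((n : ℤ) + 1) • (u3 * gE q u0 u1 u2 u3 (n + 1, 0, 0, n + 1)))
  · have := CL_map (q ^ ((n : ℤ) + 1) • LinearMap.mulLeft K u3)
      (CL q (gE q u0 u1 u2 u3) 1 (Sset (n + 2, 0, 0, n + 1))) ?_ hw1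
    · simpa [mul_sub, smul_sub] using this
    · rintro z hz a3 a2 a1 a0 ⟨⟨s, r, t1, t2, t3, t4⟩, hne⟩
      have hsr : 0 < s + r := by
        by_contra h0
        apply hne
        simp only at t1 t2 t3 t4
        simp only [Prod.mk.injEq]
        omega
      simp only at t1 t2 t3 t4
      simp only [LinearMap.smul_apply, LinearMap.mulLeft_apply]
      rw [u3_gE h]
      simp only [smul_smul, ← zpow_add₀ hq]
      refine CL_mem _ ?_ _ (Sset_mk s r hsr ?_ ?_ ?_ ?_) <;> push_cast <;> omega
  · have := CL_map (q ^ (5 * n + 3 : ℤ) • LinearMap.mulLeft K (p1 * u2))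
      (CL q (gE q u0 u1 u2 u3) 1 (Sset (n + 2, 0, 0, n + 1))) ?_ (CL_tri hw)
    · simpa [mul_assoc] using this
    · rintro z hz a3 a2 a1 a0 ⟨s, r, t1, t2, t3, t4⟩
      simp only at t1 t2 t3 t4
      simp only [LinearMap.smul_apply, LinearMap.mulLeft_apply, mul_assoc]
      rw [u2_gE h, mul_smul_comm, p1_gE h, smul_sub, smul_sub, smul_sub]
      simp only [smul_smul, ← zpow_add₀ hq]
      apply AddSubgroup.sub_mem
      · refine CL_mem _ ?_ _ (Sset_mk (s + 1) (r + 1) (by omega) ?_ ?_ ?_ ?_) <;> push_cast <;> omega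
      · refine CL_mem _ ?_ _ (Sset_mk (s + 2) (r + 1) (by omega) ?_ ?_ ?_ ?_) <;> push_cast <;> omega
  · rw [u3_gE h, smul_smul, ← zpow_add₀ hq]
    simp

theorem lat_W (n : ℕ) {x x1 : R}
    (hx1 : x1 - gE q u0 u1 u2 u3 (n + 2, 0, 0, n + 1) ∈ CL q (gE q u0 u1 u2 u3) 1 (Sset (n + 2, 0, 0, n + 1)))
    (hx : x - gE q u0 u1 u2 u3 (n + 1, 0, 0, n) ∈ CL q (gE q u0 u1 u2 u3) 1 (Sset (n + 1, 0, 0, n))) :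
    q ^ ((n : ℤ) + 1) • (x1 * u0) - q ^ (5 * n + 4 : ℤ) • (x * u1 * p0) -
      gE q u0 u1 u2 u3 (n + 2, 0, 0, n + 2) ∈ CL q (gE q u0 u1 u2 u3) 1 (Sset (n + 2, 0, 0, n + 2)) := by
  have hq := h.hq
  apply sub_lem (e := q ^ ((n : ℤ) + 1) • (gE q u0 u1 u2 u3 (n + 2, 0, 0, n + 1) * u0))
  · have := CL_map (q ^ ((n : ℤ) + 1) • LinearMap.mulRight K u0)
      (CL q (gE q u0 u1 u2 u3) 1 (Sset (n + 2, 0, 0, n + 2))) ?_ hx1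
    · simpa [sub_mul, smul_sub] using this
    · rintro z hz a3 a2 a1 a0 ⟨⟨s, r, t1, t2, t3, t4⟩, hne⟩
      have hsr : 0 < s + r := by
        by_contra h0
        apply hne
        simp only at t1 t2 t3 t4
        simp only [Prod.mk.injEq]
        omega
      simp only at t1 t2 t3 t4
      simp only [LinearMap.smul_apply, LinearMap.mulRight_apply]
      rw [gE_u0 h]
      simp only [smul_smul, ← zpow_add₀ hq]
      refine CL_mem _ ?_ _ (Sset_mk s r hsr ?_ ?_ ?_ ?_) <;> push_cast <;> omega
  · have := CL_map (q ^ (5 * n + 4 : ℤ) • LinearMap.mulRight K (u1 * p0))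
      (CL q (gE q u0 u1 u2 u3) 1 (Sset (n + 2, 0, 0, n + 2))) ?_ (CL_tri hx)
    · simpa [mul_assoc] using this
    · rintro z hz a3 a2 a1 a0 ⟨s, r, t1, t2, t3, t4⟩
      simp only at t1 t2 t3 t4
      simp only [LinearMap.smul_apply, LinearMap.mulRight_apply, ← mul_assoc]
      rw [gE_u1 h, smul_mul_assoc, gE_p0 h, smul_sub, smul_sub, smul_sub]
      simp only [smul_smul, ← zpow_add₀ hq]
      apply AddSubgroup.sub_mem
      · refine CL_mem _ ?_ _ (Sset_mk (s + 1) (r + 1) (by omega) ?_ ?_ ?_ ?_) <;> push_cast <;> omega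
      · refine CL_mem _ ?_ _ (Sset_mk (s + 1) (r + 2) (by omega) ?_ ?_ ?_ ?_) <;> push_cast <;> omega
  · rw [gE_u0 h, smul_smul, ← zpow_add₀ hq]
    simp

theorem lat (n : ℕ) :
    (WX q u0 u1 u2 u3 p1 p0 n).1 - gE q u0 u1 u2 u3 (n, 0, 0, n) ∈ CL q (gE q u0 u1 u2 u3) 1 (Sset (n, 0, 0, n)) ∧
    (WX q u0 u1 u2 u3 p1 p0 n).2.1 - gE q u0 u1 u2 u3 (n + 1, 0, 0, n) ∈
      CL q (gE q u0 u1 u2 u3) 1 (Sset (n + 1, 0, 0, n)) ∧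
    (WX q u0 u1 u2 u3 p1 p0 n).2.2 - gE q u0 u1 u2 u3 (n + 1, 0, 0, n + 1) ∈
      CL q (gE q u0 u1 u2 u3) 1 (Sset (n + 1, 0, 0, n + 1)) := by
  induction n with
  | zero =>
    refine ⟨?_, ?_, ?_⟩
    · simp [WX, gE, gm, bexp]
    · simp [WX, gE, gm, bexp]
    · have := (CL q (gE q u0 u1 u2 u3) 1 (Sset (0 + 1, 0, 0, 0 + 1))).neg_mem
        (CL_mem 2 (by norm_num) (0, 1, 1, 0) (Sset_mk 1 1 (by norm_num) (by simp) (by simp) (by simp) (by simp)))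
      simpa [WX, gE, gm, bexp] using this
  | succ n ih =>
    obtain ⟨i1, i2, i3⟩ := ih
    have j := lat_X h n i3 i1
    exact ⟨i3, j, lat_W h n j i2⟩

end
end Part9

section Part10
variable {K R : Type*} [Field K] [Ring R] [Algebra K R]

theorem CL_span {q : K} {E : Idx → R} {z0 : ℤ} {P : Set Idx} {x : R} (hx : x ∈ CL q E z0 P) :
    x ∈ Submodule.span K (E '' P) := by
  have : CL q E z0 P ≤ (Submodule.span K (E '' P)).toAddSubgroup := by
    apply (AddSubgroup.closure_le _).mpr
    rintro _ ⟨z, hz, b, hb, rfl⟩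
    exact Submodule.smul_mem _ _ (Submodule.subset_span ⟨b, hb, rfl⟩)
  exact this hx

theorem CL_JG {q : K} {E : Idx → R} {P : Set Idx} {g : R →ₗ[K] (Idx →₀ K)}
    (hg : ∀ b, g (E b) = Finsupp.single b 1) {x : R} (hx : x ∈ CL q E 1 P) (b : Idx) : g x b ∈ JG q := by
  unfold CL at hx
  induction hx using AddSubgroup.closure_induction with
  | mem x hx =>
    obtain ⟨z, hz, c, hb, rfl⟩ := hx
    rw [_root_.map_smul, hg, Finsupp.smul_apply, Finsupp.single_apply]
    split_ifs
    · rw [smul_eq_mul, mul_one, mem_JG]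
      obtain ⟨j, rfl⟩ := Int.le.dest hz
      refine ⟨Polynomial.X ^ j, ?_⟩
      rw [Polynomial.eval₂_X_pow, ← pow_succ', add_comm, ← zpow_natCast]
      simp
    · rw [smul_zero]; exact (JG q).zero_mem
  | zero => rw [map_zero]; exact (JG q).zero_mem
  | add x y _ _ hx hy => rw [map_add]; exact (JG q).add_mem hx hy
  | neg x _ hx => rw [map_neg]; exact (JG q).neg_mem hx

namespace DSet
variable {q : K} {bar : K →+* K} {σ : R → R} {B : Idx → R} {u0 u1 u2 u3 p1 p0 : R}
  (h : DSet q bar σ B u0 u1 u2 u3 p1 p0)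
include h

theorem sone : σ 1 = 1 := by
  obtain ⟨y, hy⟩ := h.surj 1
  have := h.smul' y 1
  rw [mul_one, hy, mul_one] at this
  exact this.symm

theorem sz1 : σ u1 = q ^ (2 : ℤ) • u1 := by rw [h.s1]; norm_cast
theorem sz2 : σ u2 = q ^ (4 : ℤ) • u2 := by rw [h.s2]; norm_cast
theorem sz3 : σ u3 = q ^ (6 : ℤ) • u3 := by rw [h.s3]; norm_cast

theorem sp1 : σ p1 = q ^ (6 : ℤ) • p1 := by
  have hq := h.qr.hq
  have e3 : p1 = u3 * u1 - q ^ (2 : ℤ) • (u2 * u2) := by rw [h.qr.e31]; simp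
  conv_lhs => rw [e3]
  rw [h.ssub, h.ssm, h.smul', h.smul', h.barz, h.sz1, h.sz2, h.sz3]
  simp only [smul_mul_assoc, mul_smul_comm, smul_smul, h.qr.e13, smul_add, ← zpow_add₀ hq]
  norm_num

theorem sp0 : σ p0 = q ^ (2 : ℤ) • p0 := by
  have hq := h.qr.hq
  have e3 : p0 = u2 * u0 - q ^ (2 : ℤ) • (u1 * u1) := by rw [h.qr.e20]; simp
  conv_lhs => rw [e3]
  rw [h.ssub, h.ssm, h.smul', h.smul', h.barz, h.sz1, h.sz2, h.s0]
  simp only [smul_mul_assoc, mul_smul_comm, smul_smul, h.qr.e02, smul_add, ← zpow_add₀ hq]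
  norm_num

theorem sW1 : σ (u3 * u0 - q ^ (2 : ℤ) • (u2 * u1)) = q ^ (4 : ℤ) • (u3 * u0 - q ^ (2 : ℤ) • (u2 * u1)) := by
  have hq := h.qr.hq
  rw [h.ssub, h.ssm, h.smul', h.smul', h.barz, h.sz1, h.sz2, h.sz3, h.s0]
  have c12 := h.qr.c12
  unfold QC at c12
  simp only [smul_mul_assoc, mul_smul_comm, smul_smul, h.qr.e03, c12, smul_add, smul_sub, mul_sub, ← zpow_add₀ hq]
  match_scalars
  · norm_num
  · norm_num

theorem sX (n : ℕ) : σ (WX q u0 u1 u2 u3 p1 p0 n).2.1 =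
    q ^ (-Nnum (n + 1, 0, 0, n)) • (WX q u0 u1 u2 u3 p1 p0 n).2.1 := by
  have hq := h.qr.hq
  have t := WX'_torus h.qr h.hn
    (fun n => q ^ (4 * (n : ℤ) ^ 2 - 8 * n) • σ (WX q u0 u1 u2 u3 p1 p0 n).1)
    (fun n => q ^ (4 * (n : ℤ) ^ 2 - 4 * n - 6) • σ (WX q u0 u1 u2 u3 p1 p0 n).2.1)
    (by simp [WX, h.sone]) (by
      show q ^ (4 * ((0 : ℕ) : ℤ) ^ 2 - 4 * (0 : ℕ) - 6) • σ u3 = u3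
      rw [h.sz3, smul_smul, ← zpow_add₀ hq]; norm_num)
    (by
      show q ^ (4 * ((1 : ℕ) : ℤ) ^ 2 - 8 * (1 : ℕ)) • σ (u3 * u0 - q ^ (2 : ℤ) • (u2 * u1)) = _
      rw [h.sW1, smul_smul, ← zpow_add₀ hq]; norm_num)
    (by
      intro n
      show _ • σ (q ^ ((n : ℤ) + 1) • (u3 * (WX q u0 u1 u2 u3 p1 p0 (n + 1)).1) -
        q ^ (5 * n + 3 : ℤ) • (p1 * u2 * (WX q u0 u1 u2 u3 p1 p0 n).1)) = _
      rw [h.ssub, h.ssm, h.ssm, h.smul', h.smul', h.smul', h.barz, h.barz, h.sz3, h.sz2, h.sp1]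
      simp only [smul_mul_assoc, mul_smul_comm, smul_smul, smul_sub, ← zpow_add₀ hq]
      congr 3 <;> push_cast <;> ring)
    (by
      intro n
      show _ • σ (q ^ ((n : ℤ) + 1) • ((WX q u0 u1 u2 u3 p1 p0 (n + 1)).2.1 * u0) -
        q ^ (5 * n + 4 : ℤ) • ((WX q u0 u1 u2 u3 p1 p0 n).2.1 * u1 * p0)) = _
      rw [h.ssub, h.ssm, h.ssm, h.smul', h.smul', h.smul', h.barz, h.barz, h.s0, h.sz1, h.sp0]
      simp only [smul_mul_assoc, mul_smul_comm, smul_smul, smul_sub, ← zpow_add₀ hq, mul_assoc]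
      congr 3 <;> push_cast <;> ring) n
  have t1 := t.2.1.trans (WX_torus h.qr h.hn n).2.1.symm
  have hEm : ∀ a, gE q u0 u1 u2 u3 a ∈ Submodule.span K (Set.range (gm u0 u1 u2 u3)) := fun a =>
    Submodule.smul_mem _ _ (Submodule.subset_span ⟨a, rfl⟩)
  have hDm : ∀ a, DD K (gE q u0 u1 u2 u3) a ≤ Submodule.span K (Set.range (gm u0 u1 u2 u3)) := by
    intro a
    apply Submodule.span_le.mpr
    rintro _ ⟨b, _, rfl⟩
    exact hEm b
  have hXm : (WX q u0 u1 u2 u3 p1 p0 n).2.1 ∈ Submodule.span K (Set.range (gm u0 u1 u2 u3)) := by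
    have := Submodule.add_mem _ (hDm _ (CL_span (lat h.qr n).2.1)) (hEm (n + 1, 0, 0, n))
    simpa using this
  have hsE : ∀ a, σ (gE q u0 u1 u2 u3 a) ∈ Submodule.span K (Set.range (gm u0 u1 u2 u3)) := by
    intro a
    have := Submodule.add_mem _ (hDm _ (h.stri a)) (Submodule.smul_mem _ (q ^ (-Nnum a)) (hEm a))
    simpa using this
  have hsm : ∀ a, σ (gm u0 u1 u2 u3 a) ∈ Submodule.span K (Set.range (gm u0 u1 u2 u3)) := by
    intro a
    have := gm_gE hq u0 u1 u2 u3 a 0 (-bexp a) (by simp)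
    rw [zpow_zero, one_smul] at this
    rw [this, h.ssm]
    exact Submodule.smul_mem _ _ (hsE a)
  have hsX : σ (WX q u0 u1 u2 u3 p1 p0 n).2.1 ∈ Submodule.span K (Set.range (gm u0 u1 u2 u3)) := by
    refine h.sspan ?_ hXm
    rintro _ ⟨a, rfl⟩
    exact hsm a
  have t2 := cancel_uu h.qr h.li n (n + 1) (Submodule.smul_mem _ _ hsX) hXm t1
  rw [← t2, smul_smul, ← zpow_add₀ hq]
  have : -Nnum (n + 1, 0, 0, n) + (4 * (n : ℤ) ^ 2 - 4 * n - 6) = 0 := by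
    simp only [Nnum]; push_cast; ring
  rw [t2, this, zpow_zero, one_smul]

theorem B_eq (n : ℕ) : B (n + 1, 0, 0, n) = (WX q u0 u1 u2 u3 p1 p0 n).2.1 := by
  obtain ⟨g, hg⟩ := coords h.Eli
  rw [← sub_eq_zero]
  have hl := (lat h.qr n).2.1
  refine h.uniq hg (n + 1, 0, 0, n) _ ?_ ?_ ?_
  · have := Submodule.sub_mem _ (h.cDD (n + 1, 0, 0, n)) (CL_span hl)
    simpa using this
  · intro b
    have h1 : g (B (n + 1, 0, 0, n) - gE q u0 u1 u2 u3 (n + 1, 0, 0, n)) b ∈ JG q := by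
      obtain ⟨φ, -, he⟩ := h.c1 (n + 1, 0, 0, n)
      rw [he, map_finsuppSum, Finsupp.sum, Finsupp.finsetSum_apply]
      refine AddSubgroup.sum_mem _ fun c _ => ?_
      rw [_root_.map_smul, hg, Finsupp.smul_apply, Finsupp.single_apply]
      split_ifs
      · rw [smul_eq_mul, mul_one, mem_JG]; exact ⟨_, rfl⟩
      · rw [smul_zero]; exact (JG q).zero_mem
    have := (JG q).sub_mem h1 (CL_JG hg hl b)
    rw [← Finsupp.sub_apply, ← map_sub, sub_sub_sub_cancel_right] at this
    exact this
  · rw [h.ssub, h.sX, h.c2, smul_sub]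

theorem main (n : ℕ) : u2 ^ n * B (n + 1, 0, 0, n) * u1 ^ (n + 1) = Rs q u1 u2 p1 p0 n := by
  rw [h.B_eq]; exact (WX_torus h.qr h.hn n).2.1

end DSet

theorem Rs_filter (q : K) (u1 u2 p1 p0 : R) (n : ℕ) : Rs q u1 u2 p1 p0 n =
    ∑ kl ∈ (Finset.range (n + 2) ×ˢ Finset.range (n + 2)).filter
          (fun kl => kl.1 + kl.2 ≤ n ∨ (kl.1 = n + 1 ∧ kl.2 = 0)),
        (q ^ fexp n kl.1 kl.2 * gb q ((n : ℤ) - kl.1) kl.2 *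
            gb q ((n : ℤ) + 1 - kl.2) kl.1) •
          (p1 ^ (n + 1 - kl.1) * u2 ^ (2 * kl.1) * u1 ^ (2 * kl.2) * p0 ^ (n - kl.2)) := by
  unfold Rs
  rw [← Finset.sum_product' (Finset.range (n + 2)) (Finset.range (n + 1))]
  symm
  have hterm : ∀ kl : ℕ × ℕ, (q ^ fexp n kl.1 kl.2 * gb q ((n : ℤ) - kl.1) kl.2 *
            gb q ((n : ℤ) + 1 - kl.2) kl.1) •
          (p1 ^ (n + 1 - kl.1) * u2 ^ (2 * kl.1) * u1 ^ (2 * kl.2) * p0 ^ (n - kl.2)) =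
      cR q n kl.1 kl.2 • TT u1 u2 p1 p0 (n + 1 - kl.1) kl.1 kl.2 (n - kl.2) := by
    intro kl
    rw [cR, TT, mul_assoc]; rfl
  rw [Finset.sum_congr rfl (fun kl _ => hterm kl)]
  apply Finset.sum_subset
  · rintro ⟨k, l⟩
    simp only [Finset.mem_filter, Finset.mem_product, Finset.mem_range]
    omega
  · rintro ⟨k, l⟩
    simp only [Finset.mem_filter, Finset.mem_product, Finset.mem_range]
    intro h1 h2
    have : cR q n k l = 0 := by
      unfold cR
      by_cases hk : k ≤ n
      · rw [gb_van q ((n : ℤ) - k) l (by omega) (by omega)]; simp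
      · rw [gb_van q ((n : ℤ) + 1 - l) k (by omega) (by omega)]; simp
    rw [this, zero_smul]

theorem inst_DSet (bar : F →+* F) (σ : Sgen → Sgen) (B : Idx → Sgen)
    (hPBW : LinearIndependent F mon) (hσ : SigmaHyp bar σ) (hB : DCB bar σ B) :
    DSet qq bar σ B us0 us1 us2 us3 ps1 ps0 where
  qr := qr2
  hn := gi_qq_ne
  hZ := mem_qZ_bar hσ.1
  li := hPBW
  bq := hσ.1
  surj := hσ.2.1.2
  sadd := hσ.2.2.1
  smul' := hσ.2.2.2.1
  ssm := hσ.2.2.2.2.1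
  s0 := hσ.2.2.2.2.2.1
  s1 := hσ.2.2.2.2.2.2.1
  s2 := hσ.2.2.2.2.2.2.2.1
  s3 := hσ.2.2.2.2.2.2.2.2
  c1 := fun a => (hB a).1
  c2 := fun a => (hB a).2

end Part10
/-- For every natural number `n ≥ 0`,
`u₂ⁿ · B[n+1,0,0,n] · u₁^{n+1} = Σ_{(k,l)} q^{f(n,k,l)} [n−k; l][n+1−l; k]
p₁^{n+1−k} u₂^{2k} u₁^{2l} p₀^{n−l}`, where the sum runs over all pairs
`(k,l) ∈ ℕ²` with `k + l ≤ n` or `(k,l) = (n+1,0)`. -/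
theorem stmt17 (bar : F →+* F) (σ : Sgen → Sgen) (B : Idx → Sgen)
    (hPBW : LinearIndependent F mon) (hσ : SigmaHyp bar σ) (hB : DCB bar σ B) (n : ℕ) :
    us2 ^ n * B (n + 1, 0, 0, n) * us1 ^ (n + 1) =
      ∑ kl ∈ (Finset.range (n + 2) ×ˢ Finset.range (n + 2)).filter
          (fun kl => kl.1 + kl.2 ≤ n ∨ (kl.1 = n + 1 ∧ kl.2 = 0)),
        (qq ^ fexp n kl.1 kl.2 * qbinom ((n : ℤ) - kl.1) kl.2 *
            qbinom ((n : ℤ) + 1 - kl.2) kl.1) •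
          (ps1 ^ (n + 1 - kl.1) * us2 ^ (2 * kl.1) * us1 ^ (2 * kl.2) * ps0 ^ (n - kl.2)) := by
  exact ((inst_DSet bar σ B hPBW hσ hB).main n).trans (Rs_filter qq us1 us2 ps1 ps0 n)
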